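/- arXiv:1011.0943 — 2 statements merged into one kernel-verified Lean document; each statement's English description precedes it below -/
import Mathlib

section
/- There exists a universal constant C > 0 such that the following holds. Let Y be a random vector in ℝⁿ with log-concave density g and barycenter at the origin, let k be an integer with 2 ≤ k ≤ n, and let p ≥ −k+1 be real. Suppose r, R > 0 are such that r·B₂ⁿ ⊂ Z⁺_{max(k,p)}(g) ⊂ R·B₂ⁿ. Then |log h_{k,p}(u) − log h_{k,p}(v)| ≤ C·max(k,p)·(R/r)·‖u − v‖_HS for all u, v ∈ SO(n). -/
open MeasureTheory ProbabilityTheory Real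
open scoped ENNReal RealInnerProductSpace Pointwise NNReal

noncomputable section

/-- A nonnegative function is log-concave if `f(λx+(1-λ)y) ≥ f(x)^λ f(y)^{1-λ}`. -/
def IsLogConcaveFn {E : Type*} [AddCommGroup E] [Module ℝ E] (f : E → ℝ) : Prop :=
  (∀ x, 0 ≤ f x) ∧
  ∀ x y : E, ∀ l : ℝ, 0 ≤ l → l ≤ 1 →
    f x ^ l * f y ^ (1 - l) ≤ f (l • x + (1 - l) • y)

/-- Hilbert-Schmidt (Frobenius) norm of a matrix. -/
def hsNorm {n : ℕ} (A : Matrix (Fin n) (Fin n) ℝ) : ℝ :=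
  Real.sqrt (∑ i, ∑ j, (A i j) ^ 2)

/-- Operator norm of a matrix acting on Euclidean space. -/
def opNorm {n : ℕ} (A : Matrix (Fin n) (Fin n) ℝ) : ℝ :=
  ‖LinearMap.toContinuousLinearMap (Matrix.toEuclideanLin A)‖

/-- Application of a matrix to a Euclidean vector. -/
def mApp {n : ℕ} (A : Matrix (Fin n) (Fin n) ℝ) (x : EuclideanSpace ℝ (Fin n)) :
    EuclideanSpace ℝ (Fin n) := Matrix.toEuclideanLin A x

/-- The random vector `X` has density `f` with respect to Lebesgue measure. -/
def HasDensityFn {Ω : Type*} [MeasurableSpace Ω] (P : Measure Ω) {n : ℕ}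
    (X : Ω → EuclideanSpace ℝ (Fin n)) (f : EuclideanSpace ℝ (Fin n) → ℝ) : Prop :=
  Measurable X ∧ Measure.map X P = volume.withDensity fun x => ENNReal.ofReal (f x)

/-- `X` is isotropic: centered with identity covariance. -/
def Isotropic {Ω : Type*} [MeasurableSpace Ω] (P : Measure Ω) {n : ℕ}
    (X : Ω → EuclideanSpace ℝ (Fin n)) : Prop :=
  (∫ ω, X ω ∂P) = 0 ∧
  ∀ θ η : EuclideanSpace ℝ (Fin n), (∫ ω, ⟪X ω, θ⟫ * ⟪X ω, η⟫ ∂P) = ⟪θ, η⟫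

/-- `X` is ψ_α with constant `b`. -/
def IsPsiAlpha {Ω : Type*} [MeasurableSpace Ω] (P : Measure Ω) {n : ℕ}
    (X : Ω → EuclideanSpace ℝ (Fin n)) (α b : ℝ) : Prop :=
  ∀ p : ℝ, 2 ≤ p → ∀ y : EuclideanSpace ℝ (Fin n),
    (∫ ω, |⟪X ω, y⟫| ^ p ∂P) ^ (1/p) ≤ b * p ^ (1/α) * (∫ ω, ⟪X ω, y⟫ ^ 2 ∂P) ^ ((1:ℝ)/2)

/-- `G` is a standard Gaussian random vector in `ℝⁿ`. -/
def IsStdGaussian {Ω : Type*} [MeasurableSpace Ω] (P : Measure Ω) {n : ℕ}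
    (G : Ω → EuclideanSpace ℝ (Fin n)) : Prop :=
  Measurable G ∧
  Measure.map G P = volume.withDensity fun x =>
    ENNReal.ofReal ((2 * π) ^ (-(n:ℝ)/2) * Real.exp (-‖x‖ ^ 2 / 2))

/-- Surface area of the unit sphere `S^{k-1}` in `ℝᵏ`. -/
def sphereVol (k : ℕ) : ℝ := 2 * π ^ ((k : ℝ)/2) / Real.Gamma ((k : ℝ)/2)

/-- The marginal density `π_F g(x) = ∫_{F^⊥} g(x+y) dy`. -/
def marginalDensity {n : ℕ} (g : EuclideanSpace ℝ (Fin n) → ℝ)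
    (F : Submodule ℝ (EuclideanSpace ℝ (Fin n))) (x : EuclideanSpace ℝ (Fin n)) : ℝ :=
  ∫ y : Fᗮ, g (x + y)

/-- `h_{k,p}(u) = vol(S^{k-1}) ∫₀^∞ t^{p+k-1} π_{u(E₀)} g(t u(θ₀)) dt`. -/
def hkp {n : ℕ} (g : EuclideanSpace ℝ (Fin n) → ℝ)
    (E₀ : Submodule ℝ (EuclideanSpace ℝ (Fin n))) (θ₀ : EuclideanSpace ℝ (Fin n))
    (k : ℕ) (p : ℝ) (u : Matrix (Fin n) (Fin n) ℝ) : ℝ :=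
  sphereVol k * ∫ t in Set.Ioi (0:ℝ), t ^ (p + (k:ℝ) - 1) *
    marginalDensity g (Submodule.map (Matrix.toEuclideanLin u) E₀) (t • mApp u θ₀)

/-- Support functional of the one-sided L_q-centroid body `Z⁺_q(w)`. -/
def suppZplus {m : ℕ} (w : EuclideanSpace ℝ (Fin m) → ℝ) (q : ℝ)
    (y : EuclideanSpace ℝ (Fin m)) : ℝ :=
  (2 * ∫ x, (max ⟪x, y⟫ 0) ^ q * w x) ^ (1/q)

/-- Ball's body `K_q(w) = {x : q ∫₀^∞ t^{q-1} w(tx) dt ≥ 1}`. -/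
def ballBody {m : ℕ} (w : EuclideanSpace ℝ (Fin m) → ℝ) (q : ℝ) :
    Set (EuclideanSpace ℝ (Fin m)) :=
  {x | 1 ≤ q * ∫ t in Set.Ioi (0:ℝ), t ^ (q-1) * w (t • x)}

/-- The one-sided L_q-centroid body `Z⁺_q(w)`, as the convex set with support
functional `suppZplus w q`. -/
def ZplusBody {m : ℕ} (w : EuclideanSpace ℝ (Fin m) → ℝ) (q : ℝ) :
    Set (EuclideanSpace ℝ (Fin m)) :=
  {x | ∀ y, ⟪x, y⟫ ≤ suppZplus w q y}


/-- Log-concavity for extended nonnegative functions. -/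
def LCE {E : Type*} [AddCommGroup E] [Module ℝ E] (f : E → ℝ≥0∞) : Prop :=
  ∀ x y : E, ∀ l : ℝ, 0 < l → l < 1 →
    f x ^ l * f y ^ (1 - l) ≤ f (l • x + (1 - l) • y)

theorem LCE.convex_superlevel {E : Type*} [AddCommGroup E] [Module ℝ E] {f : E → ℝ≥0∞}
    (hf : LCE f) (t : ℝ≥0∞) : Convex ℝ {x | t < f x} := by
  rw [convex_iff_forall_pos]
  intro x hx y hy a b ha hb hab
  simp only [Set.mem_ofPred_eq] at *
  have hb' : b = 1 - a := by linarith
  have h := hf x y a ha (by linarith)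
  rw [← hb'] at h
  refine lt_of_lt_of_le ?_ h
  calc t = t ^ a * t ^ b := by
        rw [← ENNReal.rpow_add_of_nonneg _ _ ha.le hb.le, hab, ENNReal.rpow_one]
    _ < _ := ENNReal.mul_lt_mul (ENNReal.rpow_lt_rpow hx ha) (ENNReal.rpow_lt_rpow hy hb)

theorem LCE.aemeasurable {E : Type*} [NormedAddCommGroup E] [NormedSpace ℝ E]
    [MeasurableSpace E] [BorelSpace E] [FiniteDimensional ℝ E] (μ : Measure E)
    [μ.IsAddHaarMeasure] {f : E → ℝ≥0∞} (hf : LCE f) : AEMeasurable f μ := by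
  have : NullMeasurable f μ := by
    refine @measurable_of_Ioi ℝ≥0∞ (NullMeasurableSpace E μ) _ _ _ _ _ _ _ f ?_
    intro t
    exact (hf.convex_superlevel t).nullMeasurableSet μ
  exact this.aemeasurable

theorem LCE.measurable_real {f : ℝ → ℝ≥0∞} (hf : LCE f) : Measurable f := by
  refine measurable_of_Ioi fun t => ?_
  exact (hf.convex_superlevel t).ordConnected.measurableSet

theorem LCE.comp_linear {E F : Type*} [AddCommGroup E] [Module ℝ E] [AddCommGroup F] [Module ℝ F]
    {f : F → ℝ≥0∞} (hf : LCE f) (A : E →ₗ[ℝ] F) (c : F) : LCE fun x => f (c + A x) := by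
  intro x y l h0 h1
  refine (hf (c + A x) (c + A y) l h0 h1).trans (le_of_eq ?_)
  congr 1
  simp only [map_add, map_smul, smul_add]
  module

/-- one-dimensional Brunn-Minkowski for convex sets -/
theorem bm_one {A B C : Set ℝ} (hA : A.Nonempty) (hB : B.Nonempty) (hC : Convex ℝ C)
    {l : ℝ} (h0 : 0 < l) (h1 : l < 1)
    (h : ∀ a ∈ A, ∀ b ∈ B, l * a + (1 - l) * b ∈ C) :
    ENNReal.ofReal l * volume A + ENNReal.ofReal (1 - l) * volume B ≤ volume C := by
  have key : ∀ a1 ∈ A, ∀ a2 ∈ A, ∀ b1 ∈ B, ∀ b2 ∈ B,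
      ENNReal.ofReal l * edist a1 a2 + ENNReal.ofReal (1 - l) * edist b1 b2 ≤ volume C := by
    have key1 : ∀ a1 ∈ A, ∀ a2 ∈ A, ∀ b1 ∈ B, ∀ b2 ∈ B, a1 ≤ a2 → b1 ≤ b2 → 
      ENNReal.ofReal l * edist a1 a2 + ENNReal.ofReal (1 - l) * edist b1 b2 ≤ volume C := by
      intro a1 ha1 a2 ha2 b1 hb1 b2 hb2 hab hbb
      have hs : Set.Icc (l * a1 + (1 - l) * b1) (l * a2 + (1 - l) * b2) ⊆ C :=
        hC.ordConnected.out (h _ ha1 _ hb1) (h _ ha2 _ hb2)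
      refine le_trans (le_of_eq ?_) (measure_mono hs)
      rw [Real.volume_Icc, edist_comm a1, edist_comm b1, edist_dist, edist_dist, Real.dist_eq, Real.dist_eq,
        abs_of_nonneg (by linarith), abs_of_nonneg (by linarith),
        ← ENNReal.ofReal_mul h0.le, ← ENNReal.ofReal_mul (by linarith),
        ← ENNReal.ofReal_add (mul_nonneg h0.le (by linarith)) (mul_nonneg (by linarith) (by linarith))]
      congr 1; ring
    intro a1 ha1 a2 ha2 b1 hb1 b2 hb2
    rcases le_total a1 a2 with ha | ha <;> rcases le_total b1 b2 with hb | hb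
    · exact key1 a1 ha1 a2 ha2 b1 hb1 b2 hb2 ha hb
    · rw [edist_comm b1]; exact key1 a1 ha1 a2 ha2 b2 hb2 b1 hb1 ha hb
    · rw [edist_comm a1]; exact key1 a2 ha2 a1 ha1 b1 hb1 b2 hb2 ha hb
    · rw [edist_comm a1, edist_comm b1]; exact key1 a2 ha2 a1 ha1 b2 hb2 b1 hb1 ha hb
  have hl : ENNReal.ofReal l ≠ 0 := by simp [h0]
  have hl' : ENNReal.ofReal (1 - l) ≠ 0 := by simp [h1]
  calc _ ≤ ENNReal.ofReal l * Metric.ediam A + ENNReal.ofReal (1 - l) * Metric.ediam B := by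
        gcongr <;> exact Real.volume_le_diam _
    _ ≤ _ := by
        obtain ⟨a0, ha0⟩ := hA
        obtain ⟨b0, hb0⟩ := hB
        by_cases hv : volume C = ∞
        · simp [hv]
        -- bound diam A
        have step : ∀ a1 ∈ A, ∀ a2 ∈ A, 
            ENNReal.ofReal l * edist a1 a2 + ENNReal.ofReal (1 - l) * Metric.ediam B ≤ volume C := by
          intro a1 ha1 a2 ha2
          have hfin : ENNReal.ofReal l * edist a1 a2 ≤ volume C := by
            have := key a1 ha1 a2 ha2 b0 hb0 b0 hb0
            simpa using this
          rw [add_comm]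
          refine add_le_of_le_tsub_right_of_le hfin ?_
          rw [mul_comm, ← ENNReal.le_div_iff_mul_le (Or.inl hl') (Or.inl ENNReal.ofReal_ne_top)]
          refine Metric.ediam_le fun b1 hb1 b2 hb2 => ?_
          rw [ENNReal.le_div_iff_mul_le (Or.inl hl') (Or.inl ENNReal.ofReal_ne_top), mul_comm]
          refine ENNReal.le_sub_of_add_le_right (ne_top_of_le_ne_top hv hfin) ?_
          rw [add_comm]
          exact key a1 ha1 a2 ha2 b1 hb1 b2 hb2
        have hfin : ENNReal.ofReal (1 - l) * Metric.ediam B ≤ volume C := by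
          have := step a0 ha0 a0 ha0
          simpa using this
        refine add_le_of_le_tsub_right_of_le hfin ?_
        rw [mul_comm, ← ENNReal.le_div_iff_mul_le (Or.inl hl) (Or.inl ENNReal.ofReal_ne_top)]
        refine Metric.ediam_le fun b1 hb1 b2 hb2 => ?_
        rw [ENNReal.le_div_iff_mul_le (Or.inl hl) (Or.inl ENNReal.ofReal_ne_top), mul_comm]
        refine ENNReal.le_sub_of_add_le_right (ne_top_of_le_ne_top hv hfin) ?_
        exact step b1 hb1 b2 hb2

theorem amgm_ennreal (x y : ℝ≥0∞) {l : ℝ} (h0 : 0 < l) (h1 : l < 1) :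
    x ^ l * y ^ (1 - l) ≤ ENNReal.ofReal l * x + ENNReal.ofReal (1 - l) * y := by
  have hpq : (1 / l).HolderConjugate (1 / (1 - l)) := by
    rw [Real.holderConjugate_iff]
    refine ⟨by rw [lt_div_iff₀ h0]; linarith, by simp⟩
  have h := ENNReal.young_inequality (x ^ l) (y ^ (1 - l)) hpq
  refine h.trans (le_of_eq ?_)
  rw [← ENNReal.rpow_mul, ← ENNReal.rpow_mul, mul_one_div_cancel h0.ne',
    mul_one_div_cancel (by linarith : (1:ℝ) - l ≠ 0), ENNReal.rpow_one, ENNReal.rpow_one,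
    one_div, one_div, ENNReal.ofReal_inv_of_pos h0, ENNReal.ofReal_inv_of_pos (by linarith),
    div_eq_mul_inv, div_eq_mul_inv, inv_inv, inv_inv, mul_comm, mul_comm y]

theorem layercake_ennreal {f : ℝ → ℝ≥0∞} (hf : Measurable f) (hf1 : ∀ x, f x ≤ 1) :
    ∫⁻ x, f x = ∫⁻ t in Set.Ioi (0:ℝ), volume {x | ENNReal.ofReal t < f x} := by
  have hft : ∀ x, f x ≠ ∞ := fun x => ne_top_of_le_ne_top ENNReal.one_ne_top (hf1 x)
  have h := lintegral_eq_lintegral_meas_lt (volume : Measure ℝ) (f := fun x => (f x).toReal)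
    (Filter.Eventually.of_forall fun x => ENNReal.toReal_nonneg) hf.ennreal_toReal.aemeasurable
  simp only [ENNReal.ofReal_toReal (hft _)] at h
  rw [h]
  refine setLIntegral_congr_fun measurableSet_Ioi fun t ht => ?_
  congr 1
  ext x
  simp only [Set.mem_ofPred_eq]
  rw [ENNReal.ofReal_lt_iff_lt_toReal (le_of_lt ht) (hft x)]

theorem pl_norm {f0 f1 h : ℝ → ℝ≥0∞} (m0 : Measurable f0) (m1 : Measurable f1) (mh : Measurable h)
    (b0 : ∀ x, f0 x ≤ 1) (b1 : ∀ x, f1 x ≤ 1) (s0 : ∀ t < 1, ∃ x, t < f0 x) (s1 : ∀ t < 1, ∃ x, t < f1 x)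
    (ch : ∀ t, Convex ℝ {x | t < h x}) {l : ℝ} (h0 : 0 < l) (h1 : l < 1)
    (H : ∀ a b, f0 a ^ l * f1 b ^ (1 - l) ≤ h (l * a + (1 - l) * b)) :
    ENNReal.ofReal l * (∫⁻ x, f0 x) + ENNReal.ofReal (1 - l) * (∫⁻ x, f1 x) ≤ ∫⁻ x, h x := by
  calc _ ≤ ∫⁻ x, min (h x) 1 := by
        rw [layercake_ennreal m0 b0, layercake_ennreal m1 b1,
          layercake_ennreal (mh.min measurable_const) (fun x => min_le_right _ _),
          ← lintegral_const_mul' _ _ ENNReal.ofReal_ne_top,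
          ← lintegral_const_mul' _ _ ENNReal.ofReal_ne_top]
        have hmeas : Measurable fun t : ℝ => ENNReal.ofReal l * volume {x | ENNReal.ofReal t < f0 x} := by
          refine Measurable.const_mul ?_ _
          refine Antitone.measurable fun s t hst => measure_mono fun x hx => ?_
          exact lt_of_le_of_lt (ENNReal.ofReal_le_ofReal hst) hx
        rw [← lintegral_add_left hmeas]
        refine setLIntegral_mono' measurableSet_Ioi fun t ht => ?_
        by_cases ht1 : ENNReal.ofReal t < 1
        · have : {x | ENNReal.ofReal t < min (h x) 1} = {x | ENNReal.ofReal t < h x} := by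
            ext x; simp only [Set.mem_ofPred_eq]; rw [lt_min_iff]; exact and_iff_left ht1
          rw [this]
          refine bm_one (s0 _ ht1) (s1 _ ht1) (ch _) h0 h1 fun a ha b hb => ?_
          refine lt_of_lt_of_le ?_ (H a b)
          calc ENNReal.ofReal t = ENNReal.ofReal t ^ l * ENNReal.ofReal t ^ (1 - l) := by
                rw [← ENNReal.rpow_add_of_nonneg _ _ h0.le (by linarith)]; simp
            _ < _ := ENNReal.mul_lt_mul (ENNReal.rpow_lt_rpow ha h0)
                (ENNReal.rpow_lt_rpow hb (by linarith))
        · have e0 : {x | ENNReal.ofReal t < f0 x} = ∅ := by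
            ext x; simp only [Set.mem_ofPred_eq, Set.mem_empty_iff_false, iff_false]
            exact fun hx => ht1 (lt_of_lt_of_le hx (b0 x))
          have e1 : {x | ENNReal.ofReal t < f1 x} = ∅ := by
            ext x; simp only [Set.mem_ofPred_eq, Set.mem_empty_iff_false, iff_false]
            exact fun hx => ht1 (lt_of_lt_of_le hx (b1 x))
          simp [e0, e1]
    _ ≤ _ := lintegral_mono fun x => min_le_left _ _

theorem pl_bdd {f0 f1 h : ℝ → ℝ≥0∞} (m0 : Measurable f0) (m1 : Measurable f1) (mh : Measurable h)
    (b0 : (⨆ x, f0 x) ≠ ∞) (b1 : (⨆ x, f1 x) ≠ ∞)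
    (ch : ∀ t, Convex ℝ {x | t < h x}) {l : ℝ} (h0 : 0 < l) (h1 : l < 1)
    (H : ∀ a b, f0 a ^ l * f1 b ^ (1 - l) ≤ h (l * a + (1 - l) * b)) :
    (∫⁻ x, f0 x) ^ l * (∫⁻ x, f1 x) ^ (1 - l) ≤ ∫⁻ x, h x := by
  have h1' : 0 < 1 - l := by linarith
  set a := ⨆ x, f0 x with ha
  set b := ⨆ x, f1 x with hb
  by_cases ha0 : a = 0
  · have : ∀ x, f0 x = 0 := fun x => le_antisymm (ha0 ▸ le_iSup f0 x) (zero_le)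
    simp [this, h0]
  by_cases hb0 : b = 0
  · have : ∀ x, f1 x = 0 := fun x => le_antisymm (hb0 ▸ le_iSup f1 x) (zero_le)
    simp [this, h1']
  set c := a ^ l * b ^ (1 - l) with hc
  have hal : a ^ l ≠ 0 := by simp [ENNReal.rpow_eq_zero_iff, ha0, b0]
  have hbl : b ^ (1 - l) ≠ 0 := by simp [ENNReal.rpow_eq_zero_iff, hb0, b1]
  have hal' : a ^ l ≠ ∞ := ENNReal.rpow_ne_top_of_nonneg h0.le b0
  have hbl' : b ^ (1 - l) ≠ ∞ := ENNReal.rpow_ne_top_of_nonneg h1'.le b1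
  have hc0 : c ≠ 0 := mul_ne_zero hal hbl
  have hct : c ≠ ∞ := ENNReal.mul_ne_top hal' hbl'
  have key := pl_norm (f0 := fun x => a⁻¹ * f0 x) (f1 := fun x => b⁻¹ * f1 x) (h := fun x => c⁻¹ * h x)
    (m0.const_mul _) (m1.const_mul _) (mh.const_mul _)
    (fun x => by
      rw [mul_comm, ← div_eq_mul_inv]
      exact ENNReal.div_le_of_le_mul (by rw [one_mul]; exact le_iSup f0 x))
    (fun x => by
      rw [mul_comm, ← div_eq_mul_inv]
      exact ENNReal.div_le_of_le_mul (by rw [one_mul]; exact le_iSup f1 x))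
    (fun t ht => by
      have : t * a < a := by
        calc t * a < 1 * a := ENNReal.mul_lt_mul_left ha0 b0 ht
          _ = a := one_mul _
      obtain ⟨x, hx⟩ := lt_iSup_iff.1 this
      exact ⟨x, by rw [mul_comm, ← div_eq_mul_inv]; exact (ENNReal.lt_div_iff_mul_lt (Or.inl ha0) (Or.inl b0)).2 hx⟩)
    (fun t ht => by
      have : t * b < b := by
        calc t * b < 1 * b := ENNReal.mul_lt_mul_left hb0 b1 ht
          _ = b := one_mul _
      obtain ⟨x, hx⟩ := lt_iSup_iff.1 this
      exact ⟨x, by rw [mul_comm, ← div_eq_mul_inv]; exact (ENNReal.lt_div_iff_mul_lt (Or.inl hb0) (Or.inl b1)).2 hx⟩)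
    (fun t => by
      have : {x | t < c⁻¹ * h x} = {x | t * c < h x} := by
        ext x
        simp only [Set.mem_ofPred_eq]
        rw [mul_comm, ← div_eq_mul_inv]; exact (ENNReal.lt_div_iff_mul_lt (Or.inl hc0) (Or.inl hct))
      rw [this]; exact ch _) h0 h1
    (fun u v => by
      rw [ENNReal.mul_rpow_of_nonneg _ _ h0.le, ENNReal.mul_rpow_of_nonneg _ _ h1'.le, hc,
        ENNReal.mul_inv (Or.inl hal) (Or.inl hal'), ENNReal.inv_rpow, ENNReal.inv_rpow]
      calc _ = (a ^ l)⁻¹ * (b ^ (1 - l))⁻¹ * (f0 u ^ l * f1 v ^ (1 - l)) := by ring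
        _ ≤ _ := by gcongr; exact H u v)
  rw [lintegral_const_mul' _ _ (ENNReal.inv_ne_top.2 ha0), lintegral_const_mul' _ _ (ENNReal.inv_ne_top.2 hb0),
    lintegral_const_mul' _ _ (ENNReal.inv_ne_top.2 hc0)] at key
  have key2 := (amgm_ennreal _ _ h0 h1).trans key
  rw [ENNReal.mul_rpow_of_nonneg _ _ h0.le, ENNReal.mul_rpow_of_nonneg _ _ h1'.le, hc,
        ENNReal.mul_inv (Or.inl hal) (Or.inl hal'), ENNReal.inv_rpow, ENNReal.inv_rpow,
        ← ENNReal.mul_inv (Or.inl hal) (Or.inl hal'), ← hc] at key2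
  have key3 : c⁻¹ * ((∫⁻ x, f0 x) ^ l * (∫⁻ x, f1 x) ^ (1 - l)) ≤ c⁻¹ * ∫⁻ x, h x := by
    refine le_trans (le_of_eq ?_) key2
    rw [hc, ENNReal.mul_inv (Or.inl hal) (Or.inl hal')]; ring
  have := mul_le_mul_right key3 c
  rwa [← mul_assoc, ENNReal.mul_inv_cancel hc0 hct, one_mul, ← mul_assoc, ENNReal.mul_inv_cancel hc0 hct, one_mul] at this

theorem pl_one {f0 f1 h : ℝ → ℝ≥0∞} (m0 : Measurable f0) (m1 : Measurable f1) (mh : Measurable h)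
    (ch : ∀ t, Convex ℝ {x | t < h x}) {l : ℝ} (h0 : 0 < l) (h1 : l < 1)
    (H : ∀ a b, f0 a ^ l * f1 b ^ (1 - l) ≤ h (l * a + (1 - l) * b)) :
    (∫⁻ x, f0 x) ^ l * (∫⁻ x, f1 x) ^ (1 - l) ≤ ∫⁻ x, h x := by
  have h1' : 0 < 1 - l := by linarith
  have trunc : ∀ f : ℝ → ℝ≥0∞, Measurable f → 
      ∫⁻ x, f x = ⨆ n : ℕ, ∫⁻ x, min (f x) n := by
    intro f hf
    rw [← lintegral_iSup (fun n => hf.min measurable_const)]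
    · congr 1; ext x
      apply le_antisymm
      · rw [← inf_iSup_eq, ENNReal.iSup_natCast]; simp
      · exact iSup_le fun n => min_le_left _ _
    · intro n m hnm x
      exact min_le_min le_rfl (by exact_mod_cast hnm)
  have hb : ∀ (f : ℝ → ℝ≥0∞) (n : ℕ), (⨆ x, min (f x) (n : ℝ≥0∞)) ≠ ∞ := fun f n =>
    ne_top_of_le_ne_top (ENNReal.natCast_ne_top n) (iSup_le fun x => min_le_right _ _)
  have mono : ∀ f : ℝ → ℝ≥0∞, Monotone fun n : ℕ => ∫⁻ x, min (f x) n := fun f n m hnm =>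
    lintegral_mono fun x => min_le_min le_rfl (by exact_mod_cast hnm)
  have key : ∀ n : ℕ, (∫⁻ x, min (f0 x) n) ^ l * (∫⁻ x, min (f1 x) n) ^ (1 - l) ≤ ∫⁻ x, h x := by
    intro n
    refine pl_bdd (m0.min measurable_const) (m1.min measurable_const) mh (hb _ _) (hb _ _) ch h0 h1 ?_
    intro a b
    refine le_trans ?_ (H a b)
    gcongr <;> exact min_le_left _ _
  rw [trunc f0 m0, trunc f1 m1]
  have e0 : (⨆ n : ℕ, ∫⁻ x, min (f0 x) n) ^ l = ⨆ n : ℕ, (∫⁻ x, min (f0 x) n) ^ l :=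
    (ENNReal.orderIsoRpow l h0).map_iSup _
  have e1 : (⨆ n : ℕ, ∫⁻ x, min (f1 x) n) ^ (1 - l) = ⨆ n : ℕ, (∫⁻ x, min (f1 x) n) ^ (1 - l) :=
    (ENNReal.orderIsoRpow (1 - l) h1').map_iSup _
  rw [e0, e1, ENNReal.iSup_mul]
  refine iSup_le fun i => ?_
  rw [ENNReal.mul_iSup]
  refine iSup_le fun j => le_trans ?_ (key (max i j))
  gcongr
  · exact le_max_left i j
  · exact le_max_right i j

/-- marginal over a real variable -/
theorem LCE.marginal_real {E : Type*} [AddCommGroup E] [Module ℝ E] {f : E × ℝ → ℝ≥0∞} (hf : LCE f) :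
    LCE fun x => ∫⁻ s : ℝ, f (x, s) := by
  have slice : ∀ x : E, LCE fun s : ℝ => f (x, s) := by
    intro x
    have := hf.comp_linear (LinearMap.inr ℝ E ℝ) (x, 0)
    simpa using this
  intro x y l h0 h1
  refine pl_one (slice x).measurable_real (slice y).measurable_real (slice _).measurable_real
    (slice _).convex_superlevel h0 h1 fun a b => ?_
  simpa using hf (x, a) (y, b) l h0 h1

theorem LCE.marginal_pi (d : ℕ) : ∀ {E : Type} [AddCommGroup E] [Module ℝ E] 
    {f : E × (Fin d → ℝ) → ℝ≥0∞} (_ : LCE f),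
    LCE fun x => ∫⁻ s : (Fin d → ℝ), f (x, s) := by
  induction d with
  | zero =>
    intro E _ _ f hf x y l h0 h1
    have : ∀ x : E, ∫⁻ s : (Fin 0 → ℝ), f (x, s) = f (x, 0) := by
      intro x
      have : (volume : Measure (Fin 0 → ℝ)) = Measure.dirac 0 := by
        exact Measure.volume_pi_eq_dirac 0
      rw [this, lintegral_dirac]
    simp only [this]
    simpa using hf (x, 0) (y, 0) l h0 h1
  | succ d ih =>
    intro E _ _ f hf
    have hg : LCE fun z : (E × (Fin d → ℝ)) × ℝ => f (z.1.1, Fin.cons z.2 z.1.2) := by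
      intro x y l h0 h1
      refine (hf (x.1.1, Fin.cons x.2 x.1.2) (y.1.1, Fin.cons y.2 y.1.2) l h0 h1).trans (le_of_eq ?_)
      congr 1
      ext i
      · simp
      · refine Fin.cases ?_ (fun j => ?_) i <;> simp
    have h2 := ih hg.marginal_real
    have : ∀ x : E, ∫⁻ s : (Fin (d+1) → ℝ), f (x, s) = 
        ∫⁻ s : Fin d → ℝ, ∫⁻ t : ℝ, f (x, Fin.cons t s) := by
      intro x
      have hx : LCE fun s : Fin (d+1) → ℝ => f (x, s) := by
        have := hf.comp_linear (LinearMap.inr ℝ E (Fin (d+1) → ℝ)) (x, 0)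
        simpa using this
      have mp := (volume_preserving_piFinSuccAbove (fun _ : Fin (d + 1) => ℝ) 0).symm
      have hm : AEMeasurable (fun s : Fin (d+1) → ℝ => f (x, s)) := hx.aemeasurable volume
      have hxx := mp.lintegral_comp_emb (MeasurableEquiv.measurableEmbedding _) (fun s : Fin (d+1) → ℝ => f (x, s))
      have hm2 := hm.comp_quasiMeasurePreserving mp.quasiMeasurePreserving
      refine hxx.symm.trans ((lintegral_prod_symm _ hm2).trans ?_)
      simp [MeasurableEquiv.piFinSuccAbove]
      rfl
    simp only [this]
    exact h2

/-- marginal over a Euclidean space -/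
theorem LCE.marginal {E : Type} [AddCommGroup E] [Module ℝ E] {W : Type*} [NormedAddCommGroup W]
    [InnerProductSpace ℝ W] [FiniteDimensional ℝ W] [MeasurableSpace W] [BorelSpace W]
    {f : E × W → ℝ≥0∞} (hf : LCE f) : LCE fun x => ∫⁻ w : W, f (x, w) := by
  let b := stdOrthonormalBasis ℝ W
  have mp : MeasurePreserving (fun s : Fin (Module.finrank ℝ W) → ℝ => b.repr.symm (WithLp.toLp 2 s)) :=
    b.measurePreserving_repr_symm.comp (PiLp.volume_preserving_toLp _)
  let e : (Fin (Module.finrank ℝ W) → ℝ) ≃L[ℝ] W :=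
    (PiLp.continuousLinearEquiv 2 ℝ _).symm.trans b.repr.symm.toContinuousLinearEquiv
  have he : MeasurableEmbedding (fun s : Fin (Module.finrank ℝ W) → ℝ => b.repr.symm (WithLp.toLp 2 s)) :=
    e.toHomeomorph.toMeasurableEquiv.measurableEmbedding
  have h2 : LCE fun z : E × (Fin (Module.finrank ℝ W) → ℝ) => f (z.1, e z.2) := by
    have := hf.comp_linear (LinearMap.prodMap (LinearMap.id : E →ₗ[ℝ] E) (e : (Fin (Module.finrank ℝ W) → ℝ) →ₗ[ℝ] W)) 0
    simpa using this
  have h3 := LCE.marginal_pi _ h2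
  convert h3 using 2 with x
  exact (mp.lintegral_comp_emb he (fun w => f (x, w))).symm

theorem orth_tonelli {A B S : Type*} [NormedAddCommGroup A] [InnerProductSpace ℝ A]
    [FiniteDimensional ℝ A] [MeasurableSpace A] [BorelSpace A]
    [NormedAddCommGroup B] [InnerProductSpace ℝ B]
    [FiniteDimensional ℝ B] [MeasurableSpace B] [BorelSpace B]
    [NormedAddCommGroup S] [InnerProductSpace ℝ S]
    [FiniteDimensional ℝ S] [MeasurableSpace S] [BorelSpace S]
    (α : A →ₗᵢ[ℝ] S) (β : B →ₗᵢ[ℝ] S) (orth : ∀ a b, ⟪α a, β b⟫ = 0)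
    (hd : Module.finrank ℝ S = Module.finrank ℝ A + Module.finrank ℝ B)
    {f : S → ℝ≥0∞} (hf : AEMeasurable f) :
    ∫⁻ s, f s = ∫⁻ a, ∫⁻ b, f (α a + β b) := by
  let L0 : WithLp 2 (A × B) →ₗ[ℝ] S :=
    (LinearMap.coprod α.toLinearMap β.toLinearMap).comp (WithLp.linearEquiv 2 ℝ (A × B)).toLinearMap
  let L : WithLp 2 (A × B) →ₗᵢ[ℝ] S := ⟨L0, fun x => by
    have h1 : L0 x = α x.fst + β x.snd := rfl
    have h2 : ‖L0 x‖ ^ 2 = ‖x‖ ^ 2 := by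
      rw [h1, WithLp.prod_norm_sq_eq_of_L2, norm_add_sq_real, orth, α.norm_map, β.norm_map]; ring
    exact (sq_eq_sq₀ (norm_nonneg _) (norm_nonneg _)).1 h2⟩
  have hfin : Module.finrank ℝ (WithLp 2 (A × B)) = Module.finrank ℝ S := by
    rw [(WithLp.linearEquiv 2 ℝ (A × B)).finrank_eq, Module.finrank_prod, hd]
  let e := L.toLinearIsometryEquiv hfin
  have mp : MeasurePreserving (fun z : A × B => e (WithLp.toLp 2 z)) :=
    e.measurePreserving.comp (WithLp.volume_preserving_toLp A B)
  have he : MeasurableEmbedding (fun z : A × B => e (WithLp.toLp 2 z)) :=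
    e.toHomeomorph.toMeasurableEquiv.measurableEmbedding.comp
      (MeasurableEquiv.toLp 2 (A × B)).measurableEmbedding
  rw [← mp.lintegral_comp_emb he]
  refine (lintegral_prod _ (hf.comp_quasiMeasurePreserving mp.quasiMeasurePreserving)).trans ?_
  rfl

theorem sep_point {V : Type*} [NormedAddCommGroup V] [NormedSpace ℝ V] [FiniteDimensional ℝ V]
    [Nontrivial V] {C : Set V} (hC : Convex ℝ C) {w : V} (hw : w ∉ C) :
    ∃ f : V →L[ℝ] ℝ, f ≠ 0 ∧ ∀ a ∈ C, f a ≤ f w := by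
  by_cases hi : (interior C).Nonempty
  · obtain ⟨f, hf⟩ := geometric_hahn_banach_open_point hC.interior isOpen_interior
      (fun h => hw (interior_subset h))
    refine ⟨f, ?_, fun a ha => ?_⟩
    · rintro rfl
      obtain ⟨x, hx⟩ := hi
      exact lt_irrefl _ (hf x hx)
    · have h1 : C ⊆ closure (interior C) := by
        rw [hC.closure_interior_eq_closure_of_nonempty_interior hi]; exact subset_closure
      have h2 : closure (interior C) ⊆ {x | f x ≤ f w} :=
        closure_minimal (fun x hx => (hf x hx).le) (isClosed_le f.continuous continuous_const)
      exact h2 (h1 ha)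
  · rcases C.eq_empty_or_nonempty with rfl | hne
    · obtain ⟨x, hx⟩ := exists_ne (0 : V)
      obtain ⟨f, -, hf⟩ := exists_dual_vector ℝ x (norm_ne_zero_iff.2 hx)
      refine ⟨f, ?_, by simp⟩
      rintro rfl
      simp at hf
      exact hx (norm_eq_zero.1 hf.symm)
    · have h1 : affineSpan ℝ C ≠ ⊤ := fun h =>
        hi (hC.interior_nonempty_iff_affineSpan_eq_top.2 h)
      have h2 : (affineSpan ℝ C).direction ≠ ⊤ := fun h =>
        h1 ((AffineSubspace.direction_eq_top_iff_of_nonempty ((affineSpan_nonempty ℝ).2 hne)).1 h)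
      obtain ⟨f, hf0, hf⟩ := Submodule.exists_le_ker_of_lt_top _ h2.lt_top
      obtain ⟨c, hc⟩ := hne
      have h3 : ∀ a ∈ C, f a = f c := by
        intro a ha
        have : a -ᵥ c ∈ (affineSpan ℝ C).direction :=
          AffineSubspace.vsub_mem_direction (subset_affineSpan ℝ C ha) (subset_affineSpan ℝ C hc)
        have := hf this
        rw [LinearMap.mem_ker, vsub_eq_sub, map_sub] at this
        linarith
      let F := LinearMap.toContinuousLinearMap f
      have hF : F ≠ 0 := by
        intro h
        apply hf0
        ext x
        exact congrArg (fun g : V →L[ℝ] ℝ => g x) h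
      rcases le_total (f c) (f w) with h | h
      · exact ⟨F, hF, fun a ha => by simpa [F, h3 a ha] using h⟩
      · exact ⟨-F, neg_ne_zero.2 hF, fun a ha => by simpa [F, h3 a ha] using h⟩

section F0
variable {V : Type*} [NormedAddCommGroup V] [InnerProductSpace ℝ V] [FiniteDimensional ℝ V]
  [MeasurableSpace V] [BorelSpace V] {f : V → ℝ}

theorem IsLogConcaveFn.half (hf : IsLogConcaveFn f) (x y : V) :
    √(f x) * √(f y) ≤ f ((1/2 : ℝ) • (x + y)) := by
  have := hf.2 x y (1/2) (by norm_num) (by norm_num)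
  rw [Real.sqrt_eq_rpow, Real.sqrt_eq_rpow, smul_add]
  convert this using 3 <;> norm_num

theorem sqrt_int (hf : IsLogConcaveFn f) (hi : Integrable f) (h1 : ∫ x, f x = 1) {x0 : V} (h0 : 0 < f x0) :
    Integrable (fun x => √(f x)) ∧ ∫ x, √(f x) ≤ 2 ^ (Module.finrank ℝ V) / √(f x0) := by
  have hs : 0 < √(f x0) := Real.sqrt_pos.2 h0
  have hInt0 : Integrable (fun x => f ((1/2 : ℝ) • (x + x0))) :=
    (hi.comp_smul (by norm_num : (1/2 : ℝ) ≠ 0)).comp_add_right x0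
  have hval : ∫ x, f ((1/2 : ℝ) • (x + x0)) = 2 ^ (Module.finrank ℝ V) := by
    rw [integral_add_right_eq_self (fun x => f ((1/2 : ℝ) • x)) x0, Measure.integral_comp_smul, h1]
    simp
  have hb : ∀ x, √(f x) ≤ f ((1/2 : ℝ) • (x + x0)) / √(f x0) := fun x => by
    rw [le_div_iff₀ hs]; exact hf.half x x0
  have hI : Integrable (fun x => √(f x)) := by
    refine (hInt0.div_const (√(f x0))).mono' ?_ (Filter.Eventually.of_forall fun x => ?_)
    · exact (Real.continuous_sqrt.measurable.comp_aemeasurable hi.aemeasurable).aestronglyMeasurable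
    · rw [Real.norm_of_nonneg (Real.sqrt_nonneg _)]; exact hb x
  refine ⟨hI, (integral_mono hI (hInt0.div_const _) hb).trans (le_of_eq ?_)⟩
  rw [integral_div, hval]

theorem jensen_sqrt (hf : IsLogConcaveFn f) (hi : Integrable f) (h1 : ∫ x, f x = 1)
    (hb : ∀ φ : V →L[ℝ] ℝ, Integrable (fun x => φ x * f x) ∧ ∫ x, φ x * f x = 0)
    (hs : Integrable (fun x => √(f x))) {t1 : ℝ} (ht : ∫ x, √(f x) < t1) : 1 ≤ t1 ^ 2 * f 0 := by
  by_contra hcon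
  let C : Set (V × ℝ) := {z | 0 < z.2 ∧ 1 ≤ z.2 ^ 2 * f z.1}
  have hC : Convex ℝ C := by
    rw [convex_iff_forall_pos]
    rintro ⟨x, t⟩ ⟨ht, hx⟩ ⟨y, s⟩ ⟨hs, hy⟩ a b ha hb hab
    simp only at ht hx hs hy
    refine ⟨by simp; positivity, ?_⟩
    have hb' : b = 1 - a := by linarith
    subst hb'
    have hlc := hf.2 x y a ha.le (by linarith)
    have ham := Real.geom_mean_le_arith_mean2_weighted ha.le hb.le ht.le hs.le hab
    have hfx := hf.1 x
    have hfy := hf.1 y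
    simp only [Prod.smul_mk, Prod.mk_add_mk, smul_eq_mul]
    calc (1:ℝ) ≤ (t ^ 2 * f x) ^ a * (s ^ 2 * f y) ^ (1 - a) := by
          have e1 := Real.one_le_rpow hx ha.le
          have e2 := Real.one_le_rpow hy hb.le
          nlinarith
      _ = (t ^ a * s ^ (1 - a)) ^ 2 * (f x ^ a * f y ^ (1 - a)) := by
          rw [Real.mul_rpow (by positivity) hfx, Real.mul_rpow (by positivity) hfy]
          rw [← Real.rpow_natCast t, ← Real.rpow_natCast s, ← Real.rpow_mul ht.le, ← Real.rpow_mul hs.le,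
            mul_pow, ← Real.rpow_natCast (t ^ a), ← Real.rpow_natCast (s ^ (1 - a)),
            ← Real.rpow_mul ht.le, ← Real.rpow_mul hs.le, mul_comm _ a, mul_comm _ (1 - a)]
          ring
      _ ≤ _ := by gcongr
  have hw : ((0 : V), t1) ∉ C := fun h => hcon h.2
  obtain ⟨F, hF0, hF⟩ := sep_point hC hw
  let φ : V →L[ℝ] ℝ := F.comp (ContinuousLinearMap.inl ℝ V ℝ)
  let β : ℝ := F (0, 1)
  have hdec : ∀ x t, F (x, t) = φ x + β * t := by
    intro x t
    have : ((x, t) : V × ℝ) = (x, 0) + t • (0, 1) := by simp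
    rw [this, map_add, map_smul, smul_eq_mul, mul_comm t]; rfl
  have hF' : ∀ x t, 0 < t → 1 ≤ t ^ 2 * f x → φ x + β * t ≤ β * t1 := by
    intro x t ht hx
    have := hF (x, t) ⟨ht, hx⟩
    rw [hdec, hdec, map_zero, zero_add] at this
    exact this
  obtain ⟨hbi, hb0⟩ := hb φ
  have hmain : ∀ x, φ x * f x + β * √(f x) ≤ β * t1 * f x := by
    intro x
    rcases (hf.1 x).eq_or_lt with h | h
    · simp [← h]
    · have hsx : 0 < √(f x) := Real.sqrt_pos.2 h
      have hsq : √(f x) * √(f x) = f x := Real.mul_self_sqrt h.le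
      have := hF' x (1 / √(f x)) (by positivity) (by
        rw [div_pow, one_pow, Real.sq_sqrt h.le, one_div, inv_mul_cancel₀ h.ne'])
      have h3 := mul_le_mul_of_nonneg_right this h.le
      have h4 : β * (1 / √(f x)) * f x = β * √(f x) := by
        field_simp; rw [Real.sq_sqrt h.le]
      linarith [add_mul (φ x) (β * (1 / √(f x))) (f x)]
  have hInt0 := integral_mono (hbi.add (hs.const_mul β)) (hi.const_mul (β * t1)) hmain
  simp only [Pi.add_apply] at hInt0
  rw [integral_add hbi (hs.const_mul β), hb0, integral_const_mul, integral_const_mul, h1] at hInt0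
  have hβ : 0 ≤ β := by
    by_contra hneg
    push Not at hneg
    nlinarith
  obtain ⟨x1, hx1⟩ : ∃ x, 0 < f x := by
    by_contra hall
    push Not at hall
    have : ∫ x, f x = 0 := by
      rw [show f = fun _ => 0 from funext fun x => le_antisymm (hall x) (hf.1 x)]; simp
    linarith
  have hβ0 : β = 0 := by
    by_contra hne
    have hpos : 0 < β := lt_of_le_of_ne hβ (Ne.symm hne)
    have hsx : 0 < √(f x1) := Real.sqrt_pos.2 hx1
    set T := max (1 / √(f x1)) (t1 + |φ x1| / β + 1) with hT
    have hT0 : 0 < T := lt_of_lt_of_le (by positivity) (le_max_left _ _)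
    have := hF' x1 T hT0 (by
      have : 1 / √(f x1) ≤ T := le_max_left _ _
      have h2 : (1 / √(f x1)) ^ 2 ≤ T ^ 2 := by gcongr
      calc (1:ℝ) = (1 / √(f x1)) ^ 2 * f x1 := by
            rw [div_pow, one_pow, Real.sq_sqrt hx1.le, one_div, inv_mul_cancel₀ hx1.ne']
        _ ≤ _ := by gcongr)
    have h2 : t1 + |φ x1| / β + 1 ≤ T := le_max_right _ _
    have h3 : β * (t1 + |φ x1| / β + 1) ≤ β * T := by gcongr
    have h4 : β * (t1 + |φ x1| / β + 1) = β * t1 + |φ x1| + β := by field_simp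
    have := neg_abs_le (φ x1)
    linarith
  have hφ : φ ≠ 0 := by
    intro h
    apply hF0
    ext z
    · have := hdec z 0
      simpa [h] using this
    · simpa using hβ0
  have hle : ∀ x, φ x * f x ≤ 0 := fun x => by simpa [hβ0] using hmain x
  have hae : (fun x => -(φ x * f x)) =ᵐ[volume] 0 := by
    refine (integral_eq_zero_iff_of_nonneg (fun x => by simpa using hle x) hbi.neg).1 ?_
    simp only [Pi.neg_apply]
    rw [integral_neg, hb0, neg_zero]
  have hker : volume (LinearMap.ker (φ : V →ₗ[ℝ] ℝ) : Set V) = 0 := by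
    apply Measure.addHaar_submodule
    intro h
    apply hφ
    ext x
    have : x ∈ LinearMap.ker (φ : V →ₗ[ℝ] ℝ) := h ▸ Submodule.mem_top
    simpa using this
  have hfz : f =ᵐ[volume] 0 := by
    have hk : ∀ᵐ x ∂(volume : Measure V), x ∉ (LinearMap.ker (φ : V →ₗ[ℝ] ℝ) : Set V) := measure_eq_zero_iff_ae_notMem.1 hker
    filter_upwards [hae, hk] with x hx hkx
    simp only [Pi.zero_apply, neg_eq_zero, mul_eq_zero] at hx
    rcases hx with hx | hx
    · exact absurd (by simpa using hx) hkx
    · simpa using hx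
  rw [integral_congr_ae hfz] at h1
  simp at h1

theorem max_le_zero (hf : IsLogConcaveFn f) (hi : Integrable f) (h1 : ∫ x, f x = 1)
    (hb : ∀ φ : V →L[ℝ] ℝ, Integrable (fun x => φ x * f x) ∧ ∫ x, φ x * f x = 0) :
    0 < f 0 ∧ ∀ x, f x ≤ 4 ^ (Module.finrank ℝ V) * f 0 := by
  have key : ∀ x0, 0 < f x0 → f x0 ≤ 4 ^ (Module.finrank ℝ V) * f 0 := by
    intro x0 h0
    obtain ⟨hs, hle⟩ := sqrt_int hf hi h1 h0
    have hsx : 0 < √(f x0) := Real.sqrt_pos.2 h0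
    set A : ℝ := 2 ^ (Module.finrank ℝ V) / √(f x0) with hA
    have hA2 : A ^ 2 * f x0 = 4 ^ (Module.finrank ℝ V) := by
      rw [hA, div_pow, Real.sq_sqrt h0.le, div_mul_cancel₀ _ h0.ne', ← pow_mul, mul_comm, pow_mul]; norm_num
    have hlim : 1 ≤ A ^ 2 * f 0 := by
      have htend : Filter.Tendsto (fun t : ℝ => t ^ 2 * f 0) (nhdsWithin A (Set.Ioi A)) (nhds (A ^ 2 * f 0)) := by
        apply Filter.Tendsto.mono_left _ nhdsWithin_le_nhds
        exact Continuous.tendsto (by fun_prop) A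
      refine ge_of_tendsto htend ?_
      filter_upwards [self_mem_nhdsWithin] with t ht
      exact jensen_sqrt hf hi h1 hb hs (lt_of_le_of_lt hle ht)
    have := mul_le_mul_of_nonneg_right hlim h0.le
    calc f x0 = 1 * f x0 := (one_mul _).symm
      _ ≤ _ := this
      _ = _ := by rw [← hA2]; ring
  obtain ⟨x1, hx1⟩ : ∃ x, 0 < f x := by
    by_contra hall
    push Not at hall
    have : ∫ x, f x = 0 := by
      rw [show f = fun _ => 0 from funext fun x => le_antisymm (hall x) (hf.1 x)]; simp
    linarith
  have h0 : 0 < f 0 := by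
    have := key x1 hx1
    by_contra hneg
    have hz : f 0 = 0 := le_antisymm (not_lt.1 hneg) (hf.1 0)
    rw [hz, mul_zero] at this
    linarith
  refine ⟨h0, fun x => ?_⟩
  rcases (hf.1 x).eq_or_lt with h | h
  · rw [← h]; positivity
  · exact key x h
end F0

section F12
variable {V : Type*} [NormedAddCommGroup V] [InnerProductSpace ℝ V] [FiniteDimensional ℝ V]
  [MeasurableSpace V] [BorelSpace V] {f : V → ℝ} {Q r R : ℝ}

/-- Standing hypotheses on the marginal density. -/
structure GoodDensity (f : V → ℝ) (Q r R : ℝ) : Prop where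
  lc : IsLogConcaveFn f
  int : Integrable f
  one : ∫ x, f x = 1
  bary : ∀ φ : V →L[ℝ] ℝ, Integrable (fun x => φ x * f x) ∧ ∫ x, φ x * f x = 0
  two_le : 2 ≤ Q
  dim : (Module.finrank ℝ V : ℝ) ≤ 2 * Q
  rpos : 0 < r
  Rpos : 0 < R
  mint : ∀ φ : V, Integrable (fun x => (max ⟪x, φ⟫ 0) ^ Q * f x)
  lo : ∀ φ : V, ‖φ‖ = 1 → r ^ Q ≤ 2 * ∫ x, (max ⟪x, φ⟫ 0) ^ Q * f x
  hi : ∀ φ : V, ‖φ‖ = 1 → 2 * ∫ x, (max ⟪x, φ⟫ 0) ^ Q * f x ≤ R ^ Q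

theorem exp_two_ge : (4:ℝ) ≤ Real.exp 2 := by
  have h : Real.exp 2 = Real.exp 1 * Real.exp 1 := by rw [← Real.exp_add]; norm_num
  have := Real.exp_one_gt_d9
  rw [h]; nlinarith

theorem exp_three_ge : (16:ℝ) ≤ Real.exp 3 := by
  have h : Real.exp 3 = Real.exp 1 * Real.exp 1 * Real.exp 1 := by
    rw [← Real.exp_add, ← Real.exp_add]; norm_num
  have h1 := Real.exp_one_gt_d9
  have h2 : (7.38:ℝ) ≤ Real.exp 1 * Real.exp 1 := by nlinarith
  rw [h]; nlinarith

theorem IsLogConcaveFn.decay (hf : IsLogConcaveFn f) (h0 : 0 < f 0) {c s : ℝ} (hs : 1 ≤ s) {x : V}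
    (h : f (s⁻¹ • x) ≤ Real.exp (-c) * f 0) : f x ≤ Real.exp (-(c * s / 2)) * f ((1/2 : ℝ) • x) := by
  have hs0 : 0 < s := by linarith
  have hx := hf.1 x
  have h1 : f x ≤ Real.exp (-(c * s)) * f 0 := by
    have h2 := hf.2 x 0 s⁻¹ (by positivity) (inv_le_one_of_one_le₀ hs)
    rw [smul_zero, add_zero] at h2
    have h3 := h2.trans h
    have h4 : f 0 ^ (1 - s⁻¹) = f 0 / f 0 ^ s⁻¹ := by
      rw [Real.rpow_sub h0, Real.rpow_one]
    have hp : 0 < f 0 ^ s⁻¹ := Real.rpow_pos_of_pos h0 _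
    rw [h4] at h3
    have h5 : f x ^ s⁻¹ ≤ Real.exp (-c) * f 0 ^ s⁻¹ := by
      rw [mul_div_assoc', div_le_iff₀ hp] at h3
      have : f x ^ s⁻¹ * f 0 ≤ (Real.exp (-c) * f 0 ^ s⁻¹) * f 0 := by linarith
      exact le_of_mul_le_mul_right this h0
    have h6 := Real.rpow_le_rpow (by positivity) h5 hs0.le
    rw [← Real.rpow_mul hx, inv_mul_cancel₀ hs0.ne', Real.rpow_one,
      Real.mul_rpow (Real.exp_pos _).le hp.le, ← Real.rpow_mul h0.le, inv_mul_cancel₀ hs0.ne', Real.rpow_one,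
      ← Real.exp_mul] at h6
    convert h6 using 3; ring
  have h7 := hf.half x 0
  rw [add_zero] at h7
  have h8 : √(f x) ≤ Real.exp (-(c * s / 2)) * √(f 0) := by
    have := Real.sqrt_le_sqrt h1
    rw [Real.sqrt_mul (Real.exp_pos _).le, ← Real.exp_half] at this
    convert this using 3; ring
  calc f x = √(f x) * √(f x) := (Real.mul_self_sqrt hx).symm
    _ ≤ √(f x) * (Real.exp (-(c * s / 2)) * √(f 0)) := by gcongr
    _ = Real.exp (-(c * s / 2)) * (√(f x) * √(f 0)) := by ring
    _ ≤ _ := by gcongr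

theorem IsLogConcaveFn.convex_ge (hf : IsLogConcaveFn f) {c : ℝ} (hc : 0 ≤ c) : Convex ℝ {x | c ≤ f x} := by
  rw [convex_iff_forall_pos]
  intro x hx y hy a b ha hb hab
  have hb' : b = 1 - a := by linarith
  subst hb'
  refine le_trans ?_ (hf.2 x y a ha.le (by linarith))
  calc c = c ^ a * c ^ (1 - a) := by
        rw [← Real.rpow_add_of_nonneg hc ha.le hb.le]; simp
    _ ≤ _ := by
        have : c ≤ f x := hx
        have : c ≤ f y := hy
        have := hf.1 x
        gcongr

namespace GoodDensity
theorem zpos (H : GoodDensity f Q r R) : 0 < f 0 := (max_le_zero H.lc H.int H.one H.bary).1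

theorem two_pow (H : GoodDensity f Q r R) : (2:ℝ) ^ (Module.finrank ℝ V) ≤ 4 ^ Q := by
  have hd := H.dim
  rw [← Real.rpow_natCast, show (4:ℝ) = 2 ^ (2:ℝ) by norm_num, ← Real.rpow_mul (by norm_num)]
  exact Real.rpow_le_rpow_of_exponent_le (by norm_num) hd

theorem le_zero (H : GoodDensity f Q r R) (x : V) : f x ≤ Real.exp (3 * Q) * f 0 := by
  refine ((max_le_zero H.lc H.int H.one H.bary).2 x).trans ?_
  have h0 := H.zpos
  have hQ := H.two_le
  gcongr
  have h2 := H.two_pow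
  calc (4:ℝ) ^ (Module.finrank ℝ V) = 2 ^ (Module.finrank ℝ V) * 2 ^ (Module.finrank ℝ V) := by
        rw [← mul_pow]; norm_num
    _ ≤ 4 ^ Q * 4 ^ Q := by gcongr
    _ = 16 ^ Q := by rw [← Real.mul_rpow] <;> norm_num
    _ ≤ Real.exp 3 ^ Q := by gcongr; exact exp_three_ge
    _ = _ := by rw [← Real.exp_mul]

theorem half_int (H : GoodDensity f Q r R) : Integrable (fun x => f ((1/2 : ℝ) • x)) ∧
    ∫ x, f ((1/2 : ℝ) • x) ≤ 4 ^ Q := by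
  refine ⟨H.int.comp_smul (by norm_num : (1/2 : ℝ) ≠ 0), ?_⟩
  rw [Measure.integral_comp_smul, H.one]
  simpa using H.two_pow

theorem ball_ge [Nontrivial V] (H : GoodDensity f Q r R) {w : V} (hw : ‖w‖ ≤ r / 8) :
    Real.exp (-(6 * Q)) * f 0 ≤ f w := by
  have h0 := H.zpos
  have hQ := H.two_le
  have hr := H.rpos
  by_contra hcon
  have hcv := H.lc.convex_ge (c := Real.exp (-(6 * Q)) * f 0) (by positivity)
  obtain ⟨F, hF0, hF⟩ := sep_point hcv hcon
  let φ0 := (InnerProductSpace.toDual ℝ V).symm F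
  have hφ0 : φ0 ≠ 0 := by simpa [φ0] using hF0
  have hn : 0 < ‖φ0‖ := norm_pos_iff.2 hφ0
  set φ : V := ‖φ0‖⁻¹ • φ0 with hφ
  have hφ1 : ‖φ‖ = 1 := by rw [hφ, norm_smul, norm_inv, norm_norm, inv_mul_cancel₀ hn.ne']
  have hFi : ∀ x, ⟪x, φ⟫ = ‖φ0‖⁻¹ * F x := by
    intro x
    rw [hφ, inner_smul_right, real_inner_comm]
    simp [φ0]
  have hbig : ∀ x, r / 8 < ⟪x, φ⟫ → f x ≤ Real.exp (-(6 * Q)) * f 0 := by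
    intro x hx
    by_contra hlt
    have h1 := hF x (not_le.1 hlt).le
    have h2 : ⟪x, φ⟫ ≤ ⟪w, φ⟫ := by
      rw [hFi, hFi]; gcongr
    have h3 : ⟪w, φ⟫ ≤ ‖w‖ * ‖φ‖ := real_inner_le_norm _ _
    rw [hφ1] at h3
    linarith
  have hpt : ∀ x, (max ⟪x, φ⟫ 0) ^ Q * f x ≤ (r/4) ^ Q * f x + (r/4) ^ Q * Real.exp (-(2 * Q)) * f ((1/2 : ℝ) • x) := by
    intro x
    have hx := H.lc.1 x
    have hx2 := H.lc.1 ((1/2 : ℝ) • x)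
    rcases le_or_gt ⟪x, φ⟫ (r / 4) with h | h
    · have : max ⟪x, φ⟫ 0 ≤ r / 4 := max_le h (by positivity)
      have : (max ⟪x, φ⟫ 0) ^ Q ≤ (r/4) ^ Q := by gcongr
      have h3 : 0 ≤ (r/4) ^ Q * Real.exp (-(2 * Q)) * f ((1/2 : ℝ) • x) := by positivity
      nlinarith
    · have hpos : 0 < ⟪x, φ⟫ := by linarith
      set s := ⟪x, φ⟫ / (r / 4) with hs
      have hs1 : 1 ≤ s := by rw [hs, le_div_iff₀ (by positivity)]; linarith
      have hsx : ⟪x, φ⟫ = r / 4 * s := by rw [hs]; field_simp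
      have hd := H.lc.decay h0 hs1 (hbig (s⁻¹ • x) (by
        rw [inner_smul_left, hsx]
        have : (starRingEnd ℝ) s⁻¹ * (r / 4 * s) = r / 4 := by
          simp; field_simp
        rw [this]; linarith))
      rw [max_eq_left hpos.le, hsx, Real.mul_rpow (by positivity) (by linarith)]
      have hsQ : s ^ Q * Real.exp (-(6 * Q * s / 2)) ≤ Real.exp (-(2 * Q)) := by
        have h5 : s ≤ Real.exp s := by linarith [Real.add_one_le_exp s]
        have h6 : s ^ Q ≤ Real.exp (s * Q) := by
          rw [Real.exp_mul]; gcongr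
        calc s ^ Q * Real.exp (-(6 * Q * s / 2)) ≤ Real.exp (s * Q) * Real.exp (-(6 * Q * s / 2)) := by gcongr
          _ = Real.exp (s * Q + -(6 * Q * s / 2)) := (Real.exp_add _ _).symm
          _ ≤ _ := by
            apply Real.exp_le_exp.2; nlinarith
      calc (r / 4) ^ Q * s ^ Q * f x ≤ (r / 4) ^ Q * s ^ Q * (Real.exp (-(6 * Q * s / 2)) * f ((1/2 : ℝ) • x)) := by gcongr
        _ = (r / 4) ^ Q * (s ^ Q * Real.exp (-(6 * Q * s / 2))) * f ((1/2 : ℝ) • x) := by ring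
        _ ≤ (r / 4) ^ Q * Real.exp (-(2 * Q)) * f ((1/2 : ℝ) • x) := by gcongr
        _ ≤ _ := by
          have : 0 ≤ (r / 4) ^ Q * f x := by positivity
          linarith
  obtain ⟨hi2, hv2⟩ := H.half_int
  have hInt0 := integral_mono (H.mint φ) ((H.int.const_mul _).add (hi2.const_mul _)) hpt
  simp only [Pi.add_apply] at hInt0
  rw [integral_add (H.int.const_mul _) (hi2.const_mul _), integral_const_mul, integral_const_mul, H.one] at hInt0
  have hlo := H.lo φ hφ1
  have h4 : Real.exp (-(2 * Q)) * 4 ^ Q ≤ 1 := by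
    rw [Real.exp_neg, inv_mul_le_iff₀ (Real.exp_pos _), mul_one, Real.exp_mul]
    gcongr; exact exp_two_ge
  have hr4 : 0 < (r/4) ^ Q := by positivity
  have h5 : (r/4) ^ Q * Real.exp (-(2 * Q)) * ∫ x, f ((1/2 : ℝ) • x) ≤ (r/4) ^ Q := by
    calc _ ≤ (r/4) ^ Q * Real.exp (-(2 * Q)) * 4 ^ Q := by gcongr
      _ = (r/4) ^ Q * (Real.exp (-(2 * Q)) * 4 ^ Q) := by ring
      _ ≤ (r/4) ^ Q * 1 := by gcongr
      _ = _ := mul_one _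
  have h6 : r ^ Q = (r/4) ^ Q * 4 ^ Q := by
    rw [← Real.mul_rpow (by positivity) (by norm_num)]; congr 1; ring
  have h7 : (16:ℝ) ≤ 4 ^ Q := by
    calc (16:ℝ) = 4 ^ (2:ℝ) := by norm_num
      _ ≤ _ := Real.rpow_le_rpow_of_exponent_le (by norm_num) hQ
  nlinarith

theorem norm_le (H : GoodDensity f Q r R) {x : V} (hx : Real.exp (-(8 * Q)) * f 0 ≤ f x) :
    ‖x‖ ≤ 16 * Real.exp (11 / 2) * R := by
  have h0 := H.zpos
  have hQ := H.two_le
  have hR := H.Rpos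
  have hfx := H.lc.1 x
  have he1 : 1 ≤ Real.exp (11 / 2) := Real.one_le_exp (by norm_num)
  rcases le_or_gt ‖x‖ (8 * R) with h8 | h8
  · nlinarith
  have hxn : 0 < ‖x‖ := by linarith
  set φ : V := ‖x‖⁻¹ • x with hφ
  have hφ1 : ‖φ‖ = 1 := by rw [hφ, norm_smul, norm_inv, norm_norm, inv_mul_cancel₀ hxn.ne']
  have hxφ : ⟪x, φ⟫ = ‖x‖ := by
    rw [hφ, inner_smul_right, real_inner_self_eq_norm_sq]; field_simp
  have hhi := H.hi φ hφ1
  have hmi := H.mint φ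
  obtain ⟨hbi, hb0⟩ := H.bary (innerSL ℝ φ)
  simp only [innerSL_apply_apply] at hbi hb0
  have hcm : ∀ y, ⟪φ, y⟫ = ⟪y, φ⟫ := fun y => real_inner_comm _ _
  simp only [hcm] at hbi hb0
  -- positive part
  have hpi : Integrable (fun y => max ⟪y, φ⟫ 0 * f y) := by
    refine hbi.pos_part.congr (Filter.Eventually.of_forall fun y => ?_)
    have := H.lc.1 y
    simp only
    rw [max_mul_of_nonneg _ _ this, zero_mul]
  have hni : Integrable (fun y => max (-⟪y, φ⟫) 0 * f y) := by
    refine hbi.neg_part.congr (Filter.Eventually.of_forall fun y => ?_)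
    have := H.lc.1 y
    simp only
    rw [max_mul_of_nonneg _ _ this, zero_mul, neg_mul]
  have hpn : ∫ y, max (-⟪y, φ⟫) 0 * f y = ∫ y, max ⟪y, φ⟫ 0 * f y := by
    have h1 : ∫ y, (max ⟪y, φ⟫ 0 * f y - max (-⟪y, φ⟫) 0 * f y) = 0 := by
      refine Eq.trans ?_ hb0
      congr 1; ext y
      rcases le_total 0 ⟪y, φ⟫ with h | h
      · rw [max_eq_left h, max_eq_right (by linarith)]; ring
      · rw [max_eq_right h, max_eq_left (by linarith)]; ring
    rw [integral_sub hpi hni] at h1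
    linarith
  have hRQ : 0 < R ^ Q := by positivity
  have hpb : ∫ y, max ⟪y, φ⟫ 0 * f y ≤ 3 / 2 * R := by
    have hpt : ∀ y, max ⟪y, φ⟫ 0 * f y ≤ R * f y + R / R ^ Q * ((max ⟪y, φ⟫ 0) ^ Q * f y) := by
      intro y
      have hy := H.lc.1 y
      set t := max ⟪y, φ⟫ 0
      have ht : 0 ≤ t := le_max_right _ _
      have key : t ≤ R + R / R ^ Q * t ^ Q := by
        rcases le_total t R with h | h
        · have : 0 ≤ R / R ^ Q * t ^ Q := by positivity
          linarith
        · have h1 : 1 ≤ t / R := by rw [le_div_iff₀ hR]; linarith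
          have h2 : t / R ≤ (t / R) ^ Q := by
            calc t / R = (t / R) ^ (1:ℝ) := (Real.rpow_one _).symm
              _ ≤ _ := Real.rpow_le_rpow_of_exponent_le h1 (by linarith)
          rw [Real.div_rpow ht hR.le, div_le_iff₀ hR] at h2
          have : t ^ Q / R ^ Q * R = R / R ^ Q * t ^ Q := by ring
          linarith
      nlinarith
    have := integral_mono hpi ((H.int.const_mul R).add (hmi.const_mul (R / R ^ Q))) hpt
    simp only [Pi.add_apply] at this
    rw [integral_add (H.int.const_mul _) (hmi.const_mul _), integral_const_mul, integral_const_mul, H.one] at this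
    have h3 : R / R ^ Q * ∫ y, (max ⟪y, φ⟫ 0) ^ Q * f y ≤ R / R ^ Q * (R ^ Q / 2) := by
      gcongr; linarith
    have h4 : R / R ^ Q * (R ^ Q / 2) = R / 2 := by field_simp
    linarith
  set c : ℝ := (‖x‖ / 4) ^ Q * Real.exp (-(11 / 2 * Q)) with hc
  have hc0 : 0 < c := by positivity
  let G : V → ℝ := fun z => (max ⟪z, φ⟫ 0) ^ Q * f z
  have hG : ∀ y, c * f y - c / (4 * R) * (max (-⟪y, φ⟫) 0 * f y) ≤ G ((1/2 : ℝ) • (y + x)) := by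
    intro y
    have hy := H.lc.1 y
    set t := max (-⟪y, φ⟫) 0 with ht
    have ht0 : 0 ≤ t := le_max_right _ _
    have hGn : 0 ≤ G ((1/2 : ℝ) • (y + x)) := by
      have := H.lc.1 ((1/2 : ℝ) • (y + x))
      have : 0 ≤ max ⟪(1/2 : ℝ) • (y + x), φ⟫ 0 := le_max_right _ _
      simp only [G]; positivity
    have hrw : c * f y - c / (4 * R) * (t * f y) = c * f y * (1 - t / (4 * R)) := by field_simp
    rw [hrw]
    rcases le_or_gt (4 * R) t with h | h
    · have h1 : 1 ≤ t / (4 * R) := by rw [le_div_iff₀ (by positivity)]; linarith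
      have : 0 ≤ c * f y := by positivity
      nlinarith
    · have h1 : 1 - t / (4 * R) ≤ 1 := by
        have : 0 ≤ t / (4 * R) := by positivity
        linarith
      have hyt : -⟪y, φ⟫ ≤ t := le_max_left _ _
      have hin : ‖x‖ / 4 ≤ max ⟪(1/2 : ℝ) • (y + x), φ⟫ 0 := by
        refine le_trans ?_ (le_max_left _ _)
        rw [inner_smul_left, inner_add_left, hxφ]
        simp
        linarith
      have hfz : Real.exp (-(11 / 2 * Q)) * f y ≤ f ((1/2 : ℝ) • (y + x)) := by
        refine le_trans ?_ (H.lc.half y x)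
        have h3 : Real.exp (-(11 * Q)) * f y ≤ f x := by
          refine le_trans ?_ hx
          have := H.le_zero y
          calc Real.exp (-(11 * Q)) * f y ≤ Real.exp (-(11 * Q)) * (Real.exp (3 * Q) * f 0) := by gcongr
            _ = Real.exp (-(8 * Q)) * f 0 := by
              rw [← mul_assoc, ← Real.exp_add]; congr 2; ring
        have h4 := Real.sqrt_le_sqrt h3
        rw [Real.sqrt_mul (Real.exp_pos _).le, ← Real.exp_half] at h4
        calc Real.exp (-(11 / 2 * Q)) * f y = √(f y) * (Real.exp (-(11 * Q) / 2) * √(f y)) := by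
              rw [show -(11 * Q) / 2 = -(11 / 2 * Q) by ring]
              nth_rw 1 [← Real.mul_self_sqrt hy]; ring
          _ ≤ _ := by gcongr
      calc c * f y * (1 - t / (4 * R)) ≤ c * f y * 1 := by gcongr
        _ = (‖x‖ / 4) ^ Q * (Real.exp (-(11 / 2 * Q)) * f y) := by rw [hc]; ring
        _ ≤ _ := by simp only [G]; gcongr
  have hGi : Integrable (fun y => G ((1/2 : ℝ) • (y + x))) :=
    (Integrable.comp_smul (f := G) hmi (by norm_num : (1/2 : ℝ) ≠ 0)).comp_add_right x
  have hGv : ∫ y, G ((1/2 : ℝ) • (y + x)) = 2 ^ (Module.finrank ℝ V) * ∫ z, G z := by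
    rw [integral_add_right_eq_self (fun x => G ((1/2 : ℝ) • x)) x, Measure.integral_comp_smul]
    simp
  have hInt0 := integral_mono ((H.int.const_mul c).sub (hni.const_mul (c / (4 * R)))) hGi hG
  simp only [Pi.sub_apply] at hInt0
  rw [integral_sub (H.int.const_mul _) (hni.const_mul _), integral_const_mul, integral_const_mul, H.one, hpn, hGv] at hInt0
  have h1 : c / (4 * R) * ∫ y, max ⟪y, φ⟫ 0 * f y ≤ c / (4 * R) * (3 / 2 * R) := by gcongr
  have h2 : c / (4 * R) * (3 / 2 * R) = 3 / 8 * c := by field_simp; ring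
  have hGb : ∫ z, G z ≤ R ^ Q / 2 := by simp only [G]; linarith
  have h3 : 2 ^ (Module.finrank ℝ V) * ∫ z, G z ≤ 4 ^ Q * (R ^ Q / 2) := by
    have h5 := H.two_pow
    calc _ ≤ 2 ^ (Module.finrank ℝ V) * (R ^ Q / 2) := by gcongr
      _ ≤ _ := by gcongr
  have h4 : c ≤ (4 * R) ^ Q := by
    rw [Real.mul_rpow (by norm_num) hR.le]; linarith
  have h5 : (‖x‖ / 4) ^ Q ≤ (4 * R * Real.exp (11/2)) ^ Q := by
    rw [Real.mul_rpow (by positivity) (by positivity), ← Real.exp_mul]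
    rw [hc, Real.exp_neg, ← div_eq_mul_inv, div_le_iff₀ (Real.exp_pos _)] at h4
    exact h4
  have h6 := (Real.rpow_le_rpow_iff (by positivity) (by positivity) (by linarith : 0 < Q)).1 h5
  linarith
end GoodDensity
end F12

theorem IsLogConcaveFn.lce {E : Type*} [AddCommGroup E] [Module ℝ E] {f : E → ℝ}
    (hf : IsLogConcaveFn f) : LCE fun x => ENNReal.ofReal (f x) := by
  intro x y l h0 h1
  have hx := hf.1 x
  rw [ENNReal.ofReal_rpow_of_nonneg (hf.1 x) h0.le, ENNReal.ofReal_rpow_of_nonneg (hf.1 y) (by linarith),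
    ← ENNReal.ofReal_mul (by positivity)]
  exact ENNReal.ofReal_le_ofReal (hf.2 x y l h0.le h1.le)

theorem lintegral_haar_smul {E : Type*} [NormedAddCommGroup E] [NormedSpace ℝ E] [MeasurableSpace E]
    [BorelSpace E] [FiniteDimensional ℝ E] (μ : Measure E) [μ.IsAddHaarMeasure] {c : ℝ} (hc : 0 < c)
    (g : E → ℝ≥0∞) :
    ∫⁻ x, g x ∂μ = ENNReal.ofReal (c ^ Module.finrank ℝ E) * ∫⁻ x, g (c • x) ∂μ := by
  have h := lintegral_map_equiv (μ := μ) g (Homeomorph.smulOfNeZero c hc.ne').toMeasurableEquiv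
  have h2 : Measure.map (Homeomorph.smulOfNeZero c hc.ne').toMeasurableEquiv μ
      = ENNReal.ofReal (abs (c ^ Module.finrank ℝ E)⁻¹) • μ := Measure.map_addHaar_smul μ hc.ne'
  rw [h2, lintegral_smul_measure] at h
  have h3 : ∫⁻ a, g ((Homeomorph.smulOfNeZero c hc.ne').toMeasurableEquiv a) ∂μ = ∫⁻ x, g (c • x) ∂μ := rfl
  rw [← h3, ← h, smul_eq_mul, ← mul_assoc, ← ENNReal.ofReal_mul (by positivity), abs_of_pos (by positivity),
    mul_inv_cancel₀ (by positivity), ENNReal.ofReal_one, one_mul]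

section Ray
variable {V : Type*} [NormedAddCommGroup V] [InnerProductSpace ℝ V] [FiniteDimensional ℝ V]
  [MeasurableSpace V] [BorelSpace V] {f : V → ℝ} {Q r R : ℝ}

theorem IsLogConcaveFn.ray_meas (hf : IsLogConcaveFn f) (η : V) :
    Measurable fun t : ℝ => ENNReal.ofReal (f (t • η)) := by
  have h := (hf.lce).comp_linear (LinearMap.toSpanSingleton ℝ V η) 0
  simp only [zero_add, LinearMap.toSpanSingleton_apply] at h
  exact h.measurable_real

theorem meas_pow (σ : ℝ) : Measurable fun t : ℝ => ENNReal.ofReal (t ^ σ) :=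
  (measurable_id.pow_const σ).ennreal_ofReal

namespace GoodDensity

theorem ray_bdd (H : GoodDensity f Q r R) (η : V) {σ b : ℝ} (hσ : 0 ≤ σ) (hb : 0 ≤ b) :
    ∫⁻ t in Set.Ioc 0 b, ENNReal.ofReal (t ^ σ) * ENNReal.ofReal (f (t • η)) ≤
      ENNReal.ofReal (b ^ σ * (Real.exp (3 * Q) * f 0) * b) := by
  have h0 := H.zpos
  calc _ ≤ ∫⁻ t in Set.Ioc 0 b, ENNReal.ofReal (b ^ σ * (Real.exp (3 * Q) * f 0)) := by
        refine setLIntegral_mono' measurableSet_Ioc fun t ht => ?_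
        have ht0 := ht.1.le
        rw [← ENNReal.ofReal_mul (by positivity)]
        apply ENNReal.ofReal_le_ofReal
        have := H.lc.1 (t • η)
        exact mul_le_mul (Real.rpow_le_rpow ht0 ht.2 hσ) (H.le_zero _) this (by positivity)
    _ = _ := by
        rw [setLIntegral_const, Real.volume_Ioc, ← ENNReal.ofReal_mul (by positivity), sub_zero]

theorem ray_trunc (H : GoodDensity f Q r R) {η : V} (hη : η ≠ 0) {σ : ℝ} (hσ : 0 ≤ σ) (hσ3 : σ ≤ 3 * Q) (b : ℝ) :
    ∫⁻ t in Set.Ioc 0 b, ENNReal.ofReal (t ^ σ) * ENNReal.ofReal (f (t • η)) ≤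
      2 * ∫⁻ t in Set.Ioc 0 (16 * Real.exp (11 / 2) * R / ‖η‖), ENNReal.ofReal (t ^ σ) * ENNReal.ofReal (f (t • η)) := by
  have h0 := H.zpos
  have hQ := H.two_le
  have hR := H.Rpos
  have hn : 0 < ‖η‖ := norm_pos_iff.2 hη
  set b0 := 16 * Real.exp (11 / 2) * R / ‖η‖ with hb0
  have hb0p : 0 < b0 := by positivity
  set F : ℝ → ℝ≥0∞ := fun t => ENNReal.ofReal (t ^ σ) * ENNReal.ofReal (f (t • η)) with hF
  rcases le_or_gt b b0 with h | h
  · calc ∫⁻ t in Set.Ioc 0 b, F t ≤ ∫⁻ t in Set.Ioc 0 b0, F t :=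
          lintegral_mono_set (Set.Ioc_subset_Ioc_right h)
      _ ≤ _ := le_mul_of_one_le_left (zero_le) (by norm_num)
  have hb : 0 < b := hb0p.trans h
  have hsplit : ∫⁻ t in Set.Ioc 0 b, F t = (∫⁻ t in Set.Ioc 0 b0, F t) + ∫⁻ t in Set.Ioc b0 b, F t := by
    rw [← Set.Ioc_union_Ioc_eq_Ioc hb0p.le h.le, lintegral_union measurableSet_Ioc]
    rw [Set.disjoint_left]
    intro x hx hx2
    exact absurd hx.2 (not_le.2 hx2.1)
  have htail : ∫⁻ t in Set.Ioc b0 b, F t ≤ ENNReal.ofReal (1/2) * ∫⁻ t in Set.Ioc 0 b, F t := by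
    have himg : (fun t : ℝ => 2 * t) '' (Set.Ioc 0 (b/2)) = Set.Ioc 0 b := by
      ext x
      simp only [Set.mem_image, Set.mem_Ioc]
      constructor
      · rintro ⟨y, ⟨hy1, hy2⟩, rfl⟩; constructor <;> linarith
      · rintro ⟨h1, h2⟩; exact ⟨x / 2, ⟨by linarith, by linarith⟩, by ring⟩
    calc ∫⁻ t in Set.Ioc b0 b, F t ≤ ∫⁻ t in Set.Ioc b0 b, ENNReal.ofReal (Real.exp (-(4 * Q))) *
          (ENNReal.ofReal (t ^ σ) * ENNReal.ofReal (f ((t/2) • η))) := by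
          refine setLIntegral_mono' measurableSet_Ioc fun t ht => ?_
          have ht0 : 0 < t := hb0p.trans ht.1
          have hsm : f (t • η) < Real.exp (-(8 * Q)) * f 0 := by
            by_contra hge
            have := H.norm_le (not_lt.1 hge)
            rw [norm_smul, Real.norm_of_nonneg ht0.le] at this
            have h2 := ht.1
            rw [hb0, div_lt_iff₀ hn] at h2
            linarith
          have hd := H.lc.decay h0 (le_refl 1) (c := 8 * Q) (x := t • η) (by simpa using hsm.le)
          simp only [hF]
          rw [← ENNReal.ofReal_mul (by positivity), ← ENNReal.ofReal_mul (by positivity), ← ENNReal.ofReal_mul (by positivity)]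
          apply ENNReal.ofReal_le_ofReal
          have he : Real.exp (-(8 * Q * 1 / 2)) = Real.exp (-(4 * Q)) := by congr 1; ring
          rw [he, smul_smul] at hd
          have e2 : (1/2 * t) = t / 2 := by ring
          rw [e2] at hd
          calc t ^ σ * f (t • η) ≤ t ^ σ * (Real.exp (-(4 * Q)) * f ((t / 2) • η)) := by gcongr
            _ = _ := by ring
      _ ≤ ∫⁻ t in Set.Ioc 0 b, ENNReal.ofReal (Real.exp (-(4 * Q))) *
          (ENNReal.ofReal (t ^ σ) * ENNReal.ofReal (f ((t/2) • η))) :=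
          lintegral_mono_set (Set.Ioc_subset_Ioc_left hb0p.le)
      _ = ENNReal.ofReal (Real.exp (-(4 * Q))) * ∫⁻ t in Set.Ioc 0 b,
          (ENNReal.ofReal (t ^ σ) * ENNReal.ofReal (f ((t/2) • η))) :=
          lintegral_const_mul' _ _ ENNReal.ofReal_ne_top
      _ = ENNReal.ofReal (Real.exp (-(4 * Q))) * ∫⁻ t in Set.Ioc 0 (b/2),
          ENNReal.ofReal |2| * (ENNReal.ofReal ((2 * t) ^ σ) * ENNReal.ofReal (f (((2 * t)/2) • η))) := by
          rw [← himg, lintegral_image_eq_lintegral_abs_deriv_mul (f' := fun _ => 2) measurableSet_Ioc]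
          · intro x _
            simpa using ((hasDerivAt_id x).const_mul (2:ℝ)).hasDerivWithinAt
          · intro x _ y _ hxy
            simpa using hxy
      _ = ENNReal.ofReal (Real.exp (-(4 * Q))) * ∫⁻ t in Set.Ioc 0 (b/2), ENNReal.ofReal (2 * 2 ^ σ) * F t := by
          congr 1
          refine setLIntegral_congr_fun measurableSet_Ioc fun t ht => ?_
          have ht0 : 0 < t := ht.1
          simp only [hF]
          rw [Real.mul_rpow (by norm_num) ht0.le, mul_div_cancel_left₀ _ (by norm_num : (2:ℝ) ≠ 0),
            abs_of_pos (by norm_num), ENNReal.ofReal_mul (by positivity), ENNReal.ofReal_mul (by positivity)]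
          ring
      _ = ENNReal.ofReal (Real.exp (-(4 * Q)) * (2 * 2 ^ σ)) * ∫⁻ t in Set.Ioc 0 (b/2), F t := by
          rw [lintegral_const_mul' _ _ ENNReal.ofReal_ne_top, ← mul_assoc, ← ENNReal.ofReal_mul (by positivity)]
      _ ≤ _ := by
          gcongr
          · have h1 : (2:ℝ) ^ σ ≤ 2 ^ (3 * Q) := Real.rpow_le_rpow_of_exponent_le (by norm_num) hσ3
            have h2 : (2:ℝ) ^ (3 * Q) = 8 ^ Q := by
              rw [Real.rpow_mul (by norm_num)]; norm_num
            have h3 : Real.exp (-(4 * Q)) ≤ (16 ^ Q)⁻¹ := by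
              rw [Real.exp_neg]
              gcongr
              calc (16:ℝ) ^ Q = (4 * 4) ^ Q := by norm_num
                _ ≤ (Real.exp 2 * Real.exp 2) ^ Q := by gcongr <;> exact exp_two_ge
                _ = _ := by rw [← Real.exp_add, ← Real.exp_mul]; norm_num
            have h4 : (16:ℝ) ^ Q = 2 ^ Q * 8 ^ Q := by
              rw [← Real.mul_rpow (by norm_num) (by norm_num)]; norm_num
            have h5 : (4:ℝ) ≤ 2 ^ Q := by
              calc (4:ℝ) = 2 ^ (2:ℝ) := by norm_num
                _ ≤ _ := Real.rpow_le_rpow_of_exponent_le (by norm_num) hQ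
            have h8 : (0:ℝ) < 8 ^ Q := by positivity
            calc Real.exp (-(4 * Q)) * (2 * 2 ^ σ) ≤ (16 ^ Q)⁻¹ * (2 * 8 ^ Q) := by
                  rw [← h2]; gcongr
              _ ≤ 1 / 2 := by
                  rw [inv_mul_le_iff₀ (by positivity), h4]
                  nlinarith
          · linarith
  have hfin : ∫⁻ t in Set.Ioc 0 b, F t ≠ ∞ :=
    ne_top_of_le_ne_top ENNReal.ofReal_ne_top (H.ray_bdd η hσ hb.le)
  set J := ∫⁻ t in Set.Ioc 0 b, F t
  set J0 := ∫⁻ t in Set.Ioc 0 b0, F t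
  have hle : J ≤ J0 + ENNReal.ofReal (1/2) * J := by
    calc J = _ := hsplit
      _ ≤ _ := by gcongr
  have hJ0 : J0 ≠ ∞ := ne_top_of_le_ne_top ENNReal.ofReal_ne_top (H.ray_bdd η hσ hb0p.le)
  have hr := ENNReal.toReal_mono (ENNReal.add_ne_top.2 ⟨hJ0, ENNReal.mul_ne_top ENNReal.ofReal_ne_top hfin⟩) hle
  rw [ENNReal.toReal_add hJ0 (ENNReal.mul_ne_top ENNReal.ofReal_ne_top hfin), ENNReal.toReal_mul,
    ENNReal.toReal_ofReal (by norm_num)] at hr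
  rw [← ENNReal.toReal_le_toReal hfin (ENNReal.mul_ne_top (by norm_num) hJ0), ENNReal.toReal_mul]
  simp
  linarith

theorem ray_moment (H : GoodDensity f Q r R) {η : V} (hη : η ≠ 0) {σ : ℝ} (hσ : 0 ≤ σ) (hσ3 : σ ≤ 3 * Q) :
    ∫⁻ t in Set.Ioi 0, ENNReal.ofReal (t ^ σ) * ENNReal.ofReal (f (t • η)) ≤
      2 * ∫⁻ t in Set.Ioc 0 (16 * Real.exp (11 / 2) * R / ‖η‖), ENNReal.ofReal (t ^ σ) * ENNReal.ofReal (f (t • η)) := by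
  have : (Set.Ioi (0:ℝ)) = ⋃ n : ℕ, Set.Ioc 0 (n:ℝ) :=
    (Set.iUnion_Ioc_eq_Ioi_self_iff.2 (fun x _ ↦ exists_nat_ge x)).symm
  rw [this, setLIntegral_iUnion_of_directed]
  · exact iSup_le fun n => H.ray_trunc hη hσ hσ3 n
  · exact Monotone.directed_le fun m n hmn => Set.Ioc_subset_Ioc_right (by exact_mod_cast hmn)

theorem ray_le (H : GoodDensity f Q r R) {η : V} (hη : η ≠ 0) {σ : ℝ} (hσ : 0 ≤ σ) (hσ3 : σ ≤ 3 * Q) :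
    ∫⁻ t in Set.Ioi 0, ENNReal.ofReal (t ^ σ) * ENNReal.ofReal (f (t • η)) ≤
      2 * ENNReal.ofReal ((16 * Real.exp (11 / 2) * R / ‖η‖) ^ σ * (Real.exp (3 * Q) * f 0) *
        (16 * Real.exp (11 / 2) * R / ‖η‖)) := by
  have hR := H.Rpos
  refine (H.ray_moment hη hσ hσ3).trans ?_
  gcongr
  exact H.ray_bdd η hσ (by positivity)

end GoodDensity
end Ray

section Ray2
variable {V : Type*} [NormedAddCommGroup V] [InnerProductSpace ℝ V] [FiniteDimensional ℝ V]
  [MeasurableSpace V] [BorelSpace V] {f : V → ℝ} {Q r R : ℝ}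
namespace GoodDensity

theorem ray_sub [Nontrivial V] (H : GoodDensity f Q r R) {η η' : V} (hne : η' ≠ η) {s : ℝ} (hs : 1 ≤ s)
    (hs3 : s ≤ 3 * Q) :
    ∫⁻ t in Set.Ioi 0, ENNReal.ofReal (Real.exp (-(13 * Q * (8 * ‖η' - η‖ / r) * t))) *
      (ENNReal.ofReal (t ^ (s - 1)) * ENNReal.ofReal (f (t • η))) ≤
    ∫⁻ t in Set.Ioi 0, ENNReal.ofReal (t ^ (s - 1)) * ENNReal.ofReal (f (t • η')) := by
  have h0 := H.zpos
  have hQ := H.two_le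
  have hr := H.rpos
  have hδ : 0 < ‖η' - η‖ := norm_pos_iff.2 (sub_ne_zero.2 hne)
  set a := 8 * ‖η' - η‖ / r with ha
  have ha0 : 0 < a := by positivity
  let τ : ℝ → ℝ := fun t => t / (1 + a * t)
  have hden : ∀ t ∈ Set.Ioi (0:ℝ), 0 < 1 + a * t := fun t ht => by
    have : (0:ℝ) < t := ht
    positivity
  calc _ ≤ ∫⁻ t in Set.Ioi 0, ENNReal.ofReal |1 / (1 + a * t) ^ 2| *
        (ENNReal.ofReal ((τ t) ^ (s - 1)) * ENNReal.ofReal (f (τ t • η'))) := by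
        refine setLIntegral_mono' measurableSet_Ioi fun t ht => ?_
        have ht0 : (0:ℝ) < t := ht
        have hd := hden t ht
        set D := 1 + a * t with hD
        have hτ : 0 < τ t := by simp only [τ]; positivity
        have hft := H.lc.1 (t • η)
        have hft' := H.lc.1 (τ t • η')
        rw [← ENNReal.ofReal_mul (by positivity), ← ENNReal.ofReal_mul (by positivity),
          ← ENNReal.ofReal_mul (by positivity), ← ENNReal.ofReal_mul (by positivity)]
        apply ENNReal.ofReal_le_ofReal
        have hat : 0 < a * t := by positivity
        have hD1 : 1 ≤ D := by linarith
        have hl1 : D⁻¹ ≤ 1 := inv_le_one_of_one_le₀ hD1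
        -- the density part
        have hdens : Real.exp (-(9 * Q * (a * t))) * f (t • η) ≤ f (τ t • η') := by
          set w := a⁻¹ • (η' - η) with hw
          have hwn : ‖w‖ ≤ r / 8 := by
            rw [hw, norm_smul, norm_inv, Real.norm_of_nonneg ha0.le, ha]
            apply le_of_eq; field_simp
          have hfw := H.ball_ge hwn
          have hfw2 : Real.exp (-(9 * Q)) * f (t • η) ≤ f w := by
            refine le_trans ?_ hfw
            calc Real.exp (-(9 * Q)) * f (t • η) ≤ Real.exp (-(9 * Q)) * (Real.exp (3 * Q) * f 0) := by
                  gcongr; exact H.le_zero _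
              _ = _ := by rw [← mul_assoc, ← Real.exp_add]; congr 2; ring
          have hcomb : τ t • η' = D⁻¹ • (t • η) + (1 - D⁻¹) • w := by
            have e1 : 1 - D⁻¹ = a * t * D⁻¹ := by rw [hD]; field_simp; ring
            rw [e1, hw, smul_smul, smul_smul]
            have e2 : a * t * D⁻¹ * a⁻¹ = D⁻¹ * t := by field_simp
            rw [e2, ← smul_add, add_sub_cancel]
            simp only [τ, ← hD]
            rw [div_eq_inv_mul]
          rw [hcomb]
          refine le_trans ?_ (H.lc.2 (t • η) w D⁻¹ (by positivity) hl1)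
          calc Real.exp (-(9 * Q * (a * t))) * f (t • η)
              ≤ Real.exp (-(9 * Q) * (1 - D⁻¹)) * f (t • η) := by
                gcongr
                have e1 : 1 - D⁻¹ ≤ a * t := by
                  have : D⁻¹ * D = 1 := inv_mul_cancel₀ hd.ne'
                  have hDi : 0 < D⁻¹ := by positivity
                  nlinarith
                nlinarith
            _ = f (t • η) ^ D⁻¹ * (Real.exp (-(9 * Q)) * f (t • η)) ^ (1 - D⁻¹) := by
                rw [Real.mul_rpow (Real.exp_pos _).le hft, ← Real.exp_mul]
                have : f (t • η) = f (t • η) ^ D⁻¹ * f (t • η) ^ (1 - D⁻¹) := by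
                  rw [← Real.rpow_add_of_nonneg hft (by positivity) (by linarith)]; simp
                nth_rw 1 [this]; ring
            _ ≤ _ := by gcongr
        have hDe : D ≤ Real.exp (a * t) := by rw [hD]; linarith [Real.add_one_le_exp (a * t)]
        have hpow : Real.exp (-(4 * Q * (a * t))) * t ^ (s - 1) ≤ |1 / D ^ 2| * (τ t) ^ (s - 1) := by
          simp only [τ]
          rw [← hD, abs_of_pos (by positivity), Real.div_rpow ht0.le hd.le]
          have h5 : D ^ 2 * D ^ (s - 1) ≤ Real.exp (4 * Q * (a * t)) := by
            have e : D ^ 2 * D ^ (s - 1) = D ^ (s + 1) := by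
              rw [← Real.rpow_natCast, ← Real.rpow_add hd]; congr 1; push_cast; ring
            rw [e]
            calc D ^ (s + 1) ≤ Real.exp (a * t) ^ (s + 1) := by gcongr
              _ = Real.exp (a * t * (s + 1)) := by rw [← Real.exp_mul]
              _ ≤ _ := by
                apply Real.exp_le_exp.2
                nlinarith
          rw [Real.exp_neg, div_mul_div_comm, one_mul, inv_mul_eq_div]
          gcongr
        calc Real.exp (-(13 * Q * a * t)) * (t ^ (s - 1) * f (t • η))
            = (Real.exp (-(4 * Q * (a * t))) * t ^ (s - 1)) * (Real.exp (-(9 * Q * (a * t))) * f (t • η)) := by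
              rw [show -(13 * Q * a * t) = -(4 * Q * (a * t)) + -(9 * Q * (a * t)) by ring, Real.exp_add]; ring
          _ ≤ (|1 / D ^ 2| * (τ t) ^ (s - 1)) * f (τ t • η') := by
              gcongr
          _ = _ := by ring
    _ = ∫⁻ t in τ '' (Set.Ioi 0), ENNReal.ofReal (t ^ (s - 1)) * ENNReal.ofReal (f (t • η')) := by
        rw [lintegral_image_eq_lintegral_abs_deriv_mul (f' := fun t => 1 / (1 + a * t) ^ 2) measurableSet_Ioi]
        · intro t ht
          have hd := hden t ht
          have h1 := (hasDerivAt_id' t).fun_div (((hasDerivAt_id' t).const_mul a).const_add 1) hd.ne'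
          refine (h1.congr_deriv ?_).hasDerivWithinAt
          congr 1; ring
        · intro x hx y hy hxy
          have h1 := hden x hx
          have h2 := hden y hy
          simp only [τ] at hxy
          rw [div_eq_div_iff h1.ne' h2.ne'] at hxy
          linarith
    _ ≤ _ := by
        refine lintegral_mono_set ?_
        rintro _ ⟨t, ht, rfl⟩
        have hd := hden t ht
        have : (0:ℝ) < t := ht
        simp only [τ, Set.mem_Ioi]
        positivity

theorem ray_fin (H : GoodDensity f Q r R) {η : V} (hη : η ≠ 0) {σ : ℝ} (hσ : 0 ≤ σ) (hσ3 : σ ≤ 3 * Q) :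
    ∫⁻ t in Set.Ioi 0, ENNReal.ofReal (t ^ σ) * ENNReal.ofReal (f (t • η)) ≠ ∞ :=
  ne_top_of_le_ne_top (ENNReal.mul_ne_top (by norm_num) ENNReal.ofReal_ne_top) (H.ray_le hη hσ hσ3)

theorem ray_comp [Nontrivial V] (H : GoodDensity f Q r R) {η η' : V} (hη : η ≠ 0) {s ε : ℝ} (hs : 1 ≤ s)
    (hs3 : s ≤ 3 * Q) (hε : ‖η' - η‖ ≤ ε * ‖η‖) :
    ENNReal.ofReal (Real.exp (-(208 * (16 * Real.exp (11 / 2)) * Q * (R / r) * ε))) *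
      ∫⁻ t in Set.Ioi 0, ENNReal.ofReal (t ^ (s - 1)) * ENNReal.ofReal (f (t • η)) ≤
    ∫⁻ t in Set.Ioi 0, ENNReal.ofReal (t ^ (s - 1)) * ENNReal.ofReal (f (t • η')) := by
  have h0 := H.zpos
  have hQ := H.two_le
  have hr := H.rpos
  have hR := H.Rpos
  have hn : 0 < ‖η‖ := norm_pos_iff.2 hη
  have hε0 : 0 ≤ ε := by
    by_contra hneg
    have := norm_nonneg (η' - η)
    nlinarith
  by_cases hne : η' = η
  · subst hne
    refine mul_le_of_le_one_left (zero_le) ?_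
    rw [ENNReal.ofReal_le_one]
    apply Real.exp_le_one_iff.2
    have : 0 ≤ 208 * (16 * Real.exp (11 / 2)) * Q * (R / r) * ε := by positivity
    linarith
  set c3 := 16 * Real.exp (11 / 2) with hc3
  have hc30 : 0 < c3 := by positivity
  refine le_trans ?_ (H.ray_sub hne hs hs3)
  set L := 13 * Q * (8 * ‖η' - η‖ / r) with hL
  have hL0 : 0 ≤ L := by positivity
  set b := 2 * (c3 * R / ‖η‖) with hb
  have hb0 : 0 ≤ b := by positivity
  set m : ℝ → ℝ≥0∞ := fun t => ENNReal.ofReal (t ^ (s - 1)) * ENNReal.ofReal (f (t • η)) with hm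
  have hmm : Measurable m := (meas_pow _).mul (H.lc.ray_meas η)
  set I := ∫⁻ t in Set.Ioi 0, m t with hI
  have hIfin : I ≠ ∞ := H.ray_fin hη (by linarith) (by linarith)
  have hB : ∫⁻ t in Set.Ioi 0, ENNReal.ofReal t * m t ≤ ENNReal.ofReal b * I := by
    calc ∫⁻ t in Set.Ioi 0, ENNReal.ofReal t * m t
        = ∫⁻ t in Set.Ioi 0, ENNReal.ofReal (t ^ s) * ENNReal.ofReal (f (t • η)) := by
          refine setLIntegral_congr_fun measurableSet_Ioi fun t ht => ?_
          have ht0 : (0:ℝ) < t := ht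
          simp only [hm]
          rw [← mul_assoc, ← ENNReal.ofReal_mul ht0.le]
          congr 2
          rw [Real.rpow_sub_one ht0.ne']; field_simp
      _ ≤ 2 * ∫⁻ t in Set.Ioc 0 (c3 * R / ‖η‖), ENNReal.ofReal (t ^ s) * ENNReal.ofReal (f (t • η)) :=
          H.ray_moment hη (by linarith) hs3
      _ ≤ 2 * ∫⁻ t in Set.Ioc 0 (c3 * R / ‖η‖), ENNReal.ofReal (c3 * R / ‖η‖) * m t := by
          gcongr 2 * ?_
          refine setLIntegral_mono' measurableSet_Ioc fun t ht => ?_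
          have ht0 : (0:ℝ) < t := ht.1
          have e1 : ENNReal.ofReal (t ^ s) ≤ ENNReal.ofReal (c3 * R / ‖η‖) * ENNReal.ofReal (t ^ (s - 1)) := by
            rw [← ENNReal.ofReal_mul (by positivity)]
            apply ENNReal.ofReal_le_ofReal
            rw [show t ^ s = t * t ^ (s - 1) by rw [Real.rpow_sub_one ht0.ne']; field_simp]
            exact mul_le_mul_of_nonneg_right ht.2 (by positivity)
          have e2 := mul_le_mul_left e1 (ENNReal.ofReal (f (t • η)))
          rw [mul_assoc] at e2
          exact e2
      _ ≤ 2 * ∫⁻ t in Set.Ioi 0, ENNReal.ofReal (c3 * R / ‖η‖) * m t := by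
          gcongr 2 * ?_
          exact lintegral_mono_set Set.Ioc_subset_Ioi_self
      _ = _ := by
          rw [lintegral_const_mul' _ _ ENNReal.ofReal_ne_top, ← mul_assoc, hb, ENNReal.ofReal_mul (by norm_num)]
          simp only [ENNReal.ofReal_ofNat]
          rfl
  change _ ≤ ∫⁻ t in Set.Ioi 0, ENNReal.ofReal (Real.exp (-(L * t))) * m t
  clear_value m
  set A := ∫⁻ t in Set.Ioi 0, ENNReal.ofReal (Real.exp (-(L * t))) * m t with hA
  have hkey : ENNReal.ofReal (Real.exp (-(L * b)) * (1 + L * b)) * I ≤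
      A + ENNReal.ofReal (Real.exp (-(L * b)) * L * b) * I := by
    calc _ = ∫⁻ t in Set.Ioi 0, ENNReal.ofReal (Real.exp (-(L * b)) * (1 + L * b)) * m t :=
          (lintegral_const_mul' _ _ ENNReal.ofReal_ne_top).symm
      _ ≤ ∫⁻ t in Set.Ioi 0, (ENNReal.ofReal (Real.exp (-(L * t))) * m t +
            ENNReal.ofReal (Real.exp (-(L * b)) * L) * (ENNReal.ofReal t * m t)) := by
          refine setLIntegral_mono' measurableSet_Ioi fun t ht => ?_
          have ht0 : (0:ℝ) < t := ht
          rw [← mul_assoc (ENNReal.ofReal (Real.exp (-(L * b)) * L)), ← add_mul, ← ENNReal.ofReal_mul (by positivity), ← ENNReal.ofReal_add (by positivity) (by positivity)]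
          refine mul_le_mul_left (ENNReal.ofReal_le_ofReal ?_) _
          have h1 : Real.exp (-(L * t)) = Real.exp (-(L * b)) * Real.exp (L * b - L * t) := by
            rw [← Real.exp_add]; congr 1; ring
          have h2 := Real.add_one_le_exp (L * b - L * t)
          have h3 := Real.exp_pos (-(L * b))
          rw [h1]
          nlinarith
      _ = A + ENNReal.ofReal (Real.exp (-(L * b)) * L) * ∫⁻ t in Set.Ioi 0, ENNReal.ofReal t * m t := by
          have hmeas : Measurable fun t => ENNReal.ofReal (Real.exp (-(L * b)) * L) * (ENNReal.ofReal t * m t) :=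
            ((ENNReal.measurable_ofReal).mul hmm).const_mul _
          rw [lintegral_add_right _ hmeas,
            lintegral_const_mul' _ _ ENNReal.ofReal_ne_top]
      _ ≤ A + ENNReal.ofReal (Real.exp (-(L * b)) * L) * (ENNReal.ofReal b * I) := by gcongr
      _ = _ := by
          rw [← mul_assoc, ← ENNReal.ofReal_mul (by positivity)]
  have hexp : Real.exp (-(L * b)) * (1 + L * b) = Real.exp (-(L * b)) + Real.exp (-(L * b)) * L * b := by ring
  rw [hexp, ENNReal.ofReal_add (by positivity) (by positivity), add_mul] at hkey
  have hfinal := (ENNReal.add_le_add_iff_right (ENNReal.mul_ne_top ENNReal.ofReal_ne_top hIfin)).1 hkey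
  refine le_trans ?_ hfinal
  refine mul_le_mul_left (ENNReal.ofReal_le_ofReal (Real.exp_le_exp.2 (neg_le_neg ?_))) _
  rw [hL, hb]
  have : ‖η' - η‖ / ‖η‖ ≤ ε := by rw [div_le_iff₀ hn]; exact hε
  calc 13 * Q * (8 * ‖η' - η‖ / r) * (2 * (c3 * R / ‖η‖)) = 208 * c3 * Q * (R / r) * (‖η' - η‖ / ‖η‖) := by
        field_simp; ring
    _ ≤ _ := by gcongr
end GoodDensity
end Ray2

section Zfacts
variable {n : ℕ} {g : EuclideanSpace ℝ (Fin n) → ℝ} {Q r R : ℝ}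

theorem zplus_pow_nonneg (hg0 : ∀ x, 0 ≤ g x) (y : EuclideanSpace ℝ (Fin n)) :
    0 ≤ ∫ x, (max ⟪x, y⟫ 0) ^ Q * g x :=
  integral_nonneg fun x => mul_nonneg (Real.rpow_nonneg (le_max_right _ _) _) (hg0 x)

theorem zplus_lower (hQ : 2 ≤ Q) (hr : 0 < r)
    (hlow : ∀ x : EuclideanSpace ℝ (Fin n), ‖x‖ ≤ r → x ∈ ZplusBody g Q)
    (y : EuclideanSpace ℝ (Fin n)) : r * ‖y‖ ≤ suppZplus g Q y := by
  by_cases hy : y = 0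
  · have := hlow 0 (by simpa using hr.le) y
    simpa [hy] using this
  have hn : 0 < ‖y‖ := norm_pos_iff.2 hy
  have := hlow ((r / ‖y‖) • y) (by rw [norm_smul, Real.norm_of_nonneg (by positivity)]; field_simp; rfl) y
  rw [real_inner_smul_left, real_inner_self_eq_norm_sq] at this
  calc r * ‖y‖ = r / ‖y‖ * ‖y‖ ^ 2 := by field_simp
    _ ≤ _ := this

theorem zplus_int (hQ : 2 ≤ Q) (hr : 0 < r)
    (hlow : ∀ x : EuclideanSpace ℝ (Fin n), ‖x‖ ≤ r → x ∈ ZplusBody g Q)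
    (y : EuclideanSpace ℝ (Fin n)) : Integrable (fun x => (max ⟪x, y⟫ 0) ^ Q * g x) := by
  by_cases hy : y = 0
  · have : (fun x : EuclideanSpace ℝ (Fin n) => (max ⟪x, y⟫ 0) ^ Q * g x) = fun _ => 0 := by
      funext x
      rw [hy, inner_zero_right, max_self, Real.zero_rpow (by linarith), zero_mul]
    rw [this]; exact integrable_zero _ _ _
  by_contra hni
  have h := zplus_lower hQ hr hlow y
  rw [suppZplus, integral_undef hni, mul_zero, Real.zero_rpow (by positivity)] at h
  have hn : 0 < ‖y‖ := norm_pos_iff.2 hy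
  have : 0 < r * ‖y‖ := by positivity
  linarith

theorem zplus_lo (hQ : 2 ≤ Q) (hr : 0 < r) (hg0 : ∀ x, 0 ≤ g x)
    (hlow : ∀ x : EuclideanSpace ℝ (Fin n), ‖x‖ ≤ r → x ∈ ZplusBody g Q)
    (y : EuclideanSpace ℝ (Fin n)) (hy : ‖y‖ = 1) : r ^ Q ≤ 2 * ∫ x, (max ⟪x, y⟫ 0) ^ Q * g x := by
  have h := zplus_lower hQ hr hlow y
  rw [suppZplus, hy, mul_one] at h
  have h0 := zplus_pow_nonneg (Q := Q) hg0 y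
  calc r ^ Q ≤ ((2 * ∫ x, (max ⟪x, y⟫ 0) ^ Q * g x) ^ (1 / Q)) ^ Q := by gcongr
    _ = _ := by rw [← Real.rpow_mul (by positivity), one_div_mul_cancel (by positivity), Real.rpow_one]

theorem suppZ_eq (hQ : 2 ≤ Q) (hg0 : ∀ x, 0 ≤ g x) (hgm : AEMeasurable g)
    (y : EuclideanSpace ℝ (Fin n)) :
    suppZplus g Q y = 2 ^ (1 / Q) *
      ((∫⁻ x, (ENNReal.ofReal (max ⟪x, y⟫ 0) * ENNReal.ofReal (g x) ^ (1 / Q)) ^ Q) ^ (1 / Q)).toReal := by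
  have hQ0 : 0 < Q := by linarith
  rw [suppZplus, Real.mul_rpow (by norm_num) (zplus_pow_nonneg hg0 y), ← ENNReal.toReal_rpow,
    integral_eq_lintegral_of_nonneg_ae]
  · congr 4
    funext x
    rw [ENNReal.mul_rpow_of_nonneg _ _ hQ0.le, ← ENNReal.rpow_mul, one_div_mul_cancel hQ0.ne', ENNReal.rpow_one,
      ENNReal.ofReal_rpow_of_nonneg (le_max_right _ _) hQ0.le, ← ENNReal.ofReal_mul]
    exact Real.rpow_nonneg (le_max_right _ _) _
  · exact ae_of_all _ fun x => mul_nonneg (Real.rpow_nonneg (le_max_right _ _) _) (hg0 x)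
  · refine AEMeasurable.aestronglyMeasurable (AEMeasurable.mul (Measurable.aemeasurable ?_) hgm)
    have : Measurable fun x : EuclideanSpace ℝ (Fin n) => ⟪x, y⟫ := by fun_prop
    exact (this.max measurable_const).pow_const _

theorem zplus_fin (hQ : 2 ≤ Q) (hr : 0 < r) (hg0 : ∀ x, 0 ≤ g x)
    (hlow : ∀ x : EuclideanSpace ℝ (Fin n), ‖x‖ ≤ r → x ∈ ZplusBody g Q)
    (y : EuclideanSpace ℝ (Fin n)) :
    (∫⁻ x, (ENNReal.ofReal (max ⟪x, y⟫ 0) * ENNReal.ofReal (g x) ^ (1 / Q)) ^ Q) ^ (1 / Q) ≠ ∞ := by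
  have hQ0 : 0 < Q := by linarith
  refine ENNReal.rpow_ne_top_of_nonneg (by positivity) ?_
  have h := (zplus_int hQ hr hlow y).lintegral_lt_top
  convert h.ne using 2
  funext x
  rw [ENNReal.mul_rpow_of_nonneg _ _ hQ0.le, ← ENNReal.rpow_mul, one_div_mul_cancel hQ0.ne', ENNReal.rpow_one,
      ENNReal.ofReal_rpow_of_nonneg (le_max_right _ _) hQ0.le, ← ENNReal.ofReal_mul]
  exact Real.rpow_nonneg (le_max_right _ _) _

theorem suppZ_add (hQ : 2 ≤ Q) (hr : 0 < r) (hg0 : ∀ x, 0 ≤ g x) (hgm : AEMeasurable g)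
    (hlow : ∀ x : EuclideanSpace ℝ (Fin n), ‖x‖ ≤ r → x ∈ ZplusBody g Q)
    (y z : EuclideanSpace ℝ (Fin n)) :
    suppZplus g Q (y + z) ≤ suppZplus g Q y + suppZplus g Q z := by
  have hQ0 : 0 < Q := by linarith
  rw [suppZ_eq hQ hg0 hgm, suppZ_eq hQ hg0 hgm, suppZ_eq hQ hg0 hgm, ← mul_add,
    ← ENNReal.toReal_add (zplus_fin hQ hr hg0 hlow y) (zplus_fin hQ hr hg0 hlow z)]
  refine mul_le_mul_of_nonneg_left (ENNReal.toReal_mono ?_ ?_) (by positivity)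
  · exact ENNReal.add_ne_top.2 ⟨zplus_fin hQ hr hg0 hlow y, zplus_fin hQ hr hg0 hlow z⟩
  have hm : ∀ y : EuclideanSpace ℝ (Fin n), AEMeasurable fun x =>
      ENNReal.ofReal (max ⟪x, y⟫ 0) * ENNReal.ofReal (g x) ^ (1 / Q) := fun y => by
    have : Measurable fun x : EuclideanSpace ℝ (Fin n) => ⟪x, y⟫ := by fun_prop
    exact ((this.max measurable_const).ennreal_ofReal.aemeasurable).mul (hgm.ennreal_ofReal.pow_const _)
  refine le_trans ?_ (ENNReal.lintegral_Lp_add_le (hm y) (hm z) (by linarith : 1 ≤ Q))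
  refine ENNReal.rpow_le_rpow (lintegral_mono fun x => ENNReal.rpow_le_rpow ?_ hQ0.le) (by positivity)
  simp only [Pi.add_apply]
  rw [← add_mul, ← ENNReal.ofReal_add (le_max_right _ _) (le_max_right _ _)]
  refine mul_le_mul_left (ENNReal.ofReal_le_ofReal ?_) _
  rw [inner_add_right]
  exact max_le (add_le_add (le_max_left _ _) (le_max_left _ _)) (add_nonneg (le_max_right _ _) (le_max_right _ _))

theorem suppZ_smul (hQ : 2 ≤ Q) (hg0 : ∀ x, 0 ≤ g x) {c : ℝ} (hc : 0 < c) (y : EuclideanSpace ℝ (Fin n)) :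
    suppZplus g Q (c • y) = c * suppZplus g Q y := by
  have hQ0 : 0 < Q := by linarith
  have h0 := zplus_pow_nonneg (Q := Q) hg0 y
  have e : ∀ x : EuclideanSpace ℝ (Fin n), (max ⟪x, c • y⟫ 0) ^ Q * g x = c ^ Q * ((max ⟪x, y⟫ 0) ^ Q * g x) := by
    intro x
    rw [real_inner_smul_right, ← mul_assoc, ← Real.mul_rpow hc.le (le_max_right _ _), mul_max_of_nonneg _ _ hc.le,
      mul_zero]
  rw [suppZplus, suppZplus]
  simp_rw [e]
  rw [integral_const_mul, mul_left_comm, Real.mul_rpow (by positivity) (by positivity), ← Real.rpow_mul hc.le,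
    mul_one_div_cancel hQ0.ne', Real.rpow_one]

theorem zplus_hi (hQ : 2 ≤ Q) (hr : 0 < r) (hg0 : ∀ x, 0 ≤ g x) (hgm : AEMeasurable g)
    (hlow : ∀ x : EuclideanSpace ℝ (Fin n), ‖x‖ ≤ r → x ∈ ZplusBody g Q)
    (hup : ∀ x ∈ ZplusBody g Q, ‖x‖ ≤ R)
    (y : EuclideanSpace ℝ (Fin n)) (hy : ‖y‖ = 1) : 2 * ∫ x, (max ⟪x, y⟫ 0) ^ Q * g x ≤ R ^ Q := by
  have hQ0 : 0 < Q := by linarith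
  have h0 := zplus_pow_nonneg (Q := Q) hg0 y
  have hy0 : y ≠ 0 := by rintro rfl; simp at hy
  have hNnn : ∀ z, 0 ≤ suppZplus g Q z := fun z => by
    have := zplus_lower hQ hr hlow z
    exact le_trans (by positivity) this
  have hsub := suppZ_add hQ hr hg0 hgm hlow
  obtain ⟨φ, h1, h2⟩ := exists_extension_of_le_sublinear
    (LinearPMap.mkSpanSingleton (K := ℝ) y (suppZplus g Q y) hy0) (suppZplus g Q)
    (fun c hc x => suppZ_smul hQ hg0 hc x) hsub (by
      rintro ⟨z, hz⟩
      obtain ⟨c, rfl⟩ := Submodule.mem_span_singleton.1 hz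
      have e := LinearPMap.mkSpanSingleton'_apply (R := ℝ) (σ := RingHom.id ℝ) y (suppZplus g Q y)
        (fun c hc => by
          rcases smul_eq_zero.1 hc with h | h
          · simp [h]
          · exact absurd h hy0) c hz
      refine le_trans (le_of_eq e) ?_
      simp only [RingHom.id_apply, smul_eq_mul]
      rcases lt_or_ge 0 c with hc | hc
      · rw [suppZ_smul hQ hg0 hc]
      · exact le_trans (mul_nonpos_of_nonpos_of_nonneg hc (hNnn y)) (hNnn _))
  let x := (InnerProductSpace.toDual ℝ (EuclideanSpace ℝ (Fin n))).symm (LinearMap.toContinuousLinearMap φ)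
  have hx : ∀ z, ⟪x, z⟫ = φ z := fun z => by simp [x]
  have hxZ : x ∈ ZplusBody g Q := fun z => by rw [hx]; exact h2 z
  have hφy : φ y = suppZplus g Q y := by
    have := h1 ⟨y, Submodule.mem_span_singleton_self y⟩
    rw [this]
    exact LinearPMap.mkSpanSingleton'_apply_self (R := ℝ) (σ := RingHom.id ℝ) y _ _ _
  have hle : suppZplus g Q y ≤ R := by
    rw [← hφy, ← hx]
    calc ⟪x, y⟫ ≤ ‖x‖ * ‖y‖ := real_inner_le_norm _ _
      _ ≤ R := by rw [hy, mul_one]; exact hup x hxZ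
  calc 2 * ∫ x, (max ⟪x, y⟫ 0) ^ Q * g x = (suppZplus g Q y) ^ Q := by
        rw [suppZplus, ← Real.rpow_mul (by positivity), one_div_mul_cancel (by positivity), Real.rpow_one]
    _ ≤ _ := by have := hNnn y; gcongr

theorem pos_int (hQ : 2 ≤ Q) (hr : 0 < r) (hg0 : ∀ x, 0 ≤ g x) (hg : Integrable g)
    (hlow : ∀ x : EuclideanSpace ℝ (Fin n), ‖x‖ ≤ r → x ∈ ZplusBody g Q)
    (y : EuclideanSpace ℝ (Fin n)) : Integrable (fun x => max ⟪x, y⟫ 0 * g x) := by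
  have hQ0 : 0 < Q := by linarith
  refine Integrable.mono' (hg.add (zplus_int hQ hr hlow y)) ?_ (ae_of_all _ fun x => ?_)
  · have : Measurable fun x : EuclideanSpace ℝ (Fin n) => ⟪x, y⟫ := by fun_prop
    exact (this.max measurable_const).aestronglyMeasurable.mul hg.aestronglyMeasurable
  · have h0 : 0 ≤ max ⟪x, y⟫ 0 := le_max_right _ _
    rw [Real.norm_of_nonneg (mul_nonneg h0 (hg0 x))]
    simp only [Pi.add_apply]
    have : max ⟪x, y⟫ 0 ≤ 1 + (max ⟪x, y⟫ 0) ^ Q := by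
      rcases le_total (max ⟪x, y⟫ 0) 1 with h | h
      · have := Real.rpow_nonneg h0 Q
        linarith
      · have := Real.self_le_rpow_of_one_le h (by linarith : 1 ≤ Q)
        linarith
    nlinarith [hg0 x]

theorem pos_bary (hQ : 2 ≤ Q) (hr : 0 < r) (hg0 : ∀ x, 0 ≤ g x) (hg : Integrable g)
    (hb : ∫ x, g x • x = 0)
    (hlow : ∀ x : EuclideanSpace ℝ (Fin n), ‖x‖ ≤ r → x ∈ ZplusBody g Q)
    (y : EuclideanSpace ℝ (Fin n)) :
    ∫ x, max ⟪x, y⟫ 0 * g x = ∫ x, max ⟪x, -y⟫ 0 * g x := by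
  have hd : ∀ (x y : EuclideanSpace ℝ (Fin n)), max ⟪x, y⟫ 0 - max ⟪x, -y⟫ 0 = ⟪x, y⟫ := by
    intro x y
    rw [inner_neg_right]
    rcases le_total ⟪x, y⟫ 0 with h | h
    · rw [max_eq_right h, max_eq_left (by linarith)]; ring
    · rw [max_eq_left h, max_eq_right (by linarith)]; ring
  have hi : ∀ y : EuclideanSpace ℝ (Fin n), Integrable fun x => ⟪x, y⟫ * g x := fun y => by
    refine ((pos_int hQ hr hg0 hg hlow y).sub (pos_int hQ hr hg0 hg hlow (-y))).congr (ae_of_all _ fun x => ?_)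
    simp only [Pi.sub_apply]
    rw [← sub_mul, hd]
  have hvi : Integrable fun x => g x • x := by
    refine Integrable.of_eval_piLp fun i => ?_
    refine (hi (EuclideanSpace.single i 1)).congr (ae_of_all _ fun x => ?_)
    simp [EuclideanSpace.inner_single_right, mul_comm]
  rw [← sub_eq_zero, ← integral_sub (pos_int hQ hr hg0 hg hlow y) (pos_int hQ hr hg0 hg hlow (-y))]
  have : ∀ x, max ⟪x, y⟫ 0 * g x - max ⟪x, -y⟫ 0 * g x = ⟪y, g x • x⟫ := fun x => by
    rw [← sub_mul, hd, real_inner_smul_right, real_inner_comm, mul_comm]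
  simp_rw [this]
  rw [integral_inner hvi, hb, inner_zero_right]
end Zfacts

section Marg
variable {n : ℕ} {g : EuclideanSpace ℝ (Fin n) → ℝ} {Q r R : ℝ}

def margE (g : EuclideanSpace ℝ (Fin n) → ℝ) (V : Submodule ℝ (EuclideanSpace ℝ (Fin n)))
    (x : EuclideanSpace ℝ (Fin n)) : ℝ≥0∞ := ∫⁻ w : Vᗮ, ENNReal.ofReal (g (x + w))

def margR (g : EuclideanSpace ℝ (Fin n) → ℝ) (V : Submodule ℝ (EuclideanSpace ℝ (Fin n)))
    (x : V) : ℝ := (margE g V x).toReal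

theorem full_tonelli (V : Submodule ℝ (EuclideanSpace ℝ (Fin n))) {F : EuclideanSpace ℝ (Fin n) → ℝ≥0∞}
    (hF : AEMeasurable F) : ∫⁻ x, F x = ∫⁻ v : V, ∫⁻ w : Vᗮ, F (v + w) := by
  refine orth_tonelli V.subtypeₗᵢ Vᗮ.subtypeₗᵢ (fun a b => ?_) ?_ hF
  · exact Submodule.inner_right_of_mem_orthogonal a.2 b.2
  · exact (Submodule.finrank_add_finrank_orthogonal V).symm

theorem margE_tonelli (V F : Submodule ℝ (EuclideanSpace ℝ (Fin n))) (hFV : F ≤ V) (hg : IsLogConcaveFn g)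
    (x : EuclideanSpace ℝ (Fin n)) :
    margE g F x = ∫⁻ y : (Fᗮ ⊓ V : Submodule ℝ (EuclideanSpace ℝ (Fin n))), margE g V (x + y) := by
  have hle : Vᗮ ≤ Fᗮ := Submodule.orthogonal_le hFV
  have hm : AEMeasurable fun w : Fᗮ => ENNReal.ofReal (g (x + w)) :=
    (hg.lce.comp_linear Fᗮ.subtype x).aemeasurable _
  have := orth_tonelli (S := Fᗮ) (A := (Fᗮ ⊓ V : Submodule ℝ (EuclideanSpace ℝ (Fin n)))) (B := Vᗮ)
    ⟨Submodule.inclusion inf_le_left, fun _ => rfl⟩ ⟨Submodule.inclusion hle, fun _ => rfl⟩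
    (fun a b => Submodule.inner_right_of_mem_orthogonal (K := V) (u := (a : EuclideanSpace ℝ (Fin n)))
      (v := (b : EuclideanSpace ℝ (Fin n))) a.2.2 b.2) ?_ hm
  · unfold margE
    rw [this]
    refine lintegral_congr fun y => lintegral_congr fun w => ?_
    rw [add_assoc]
    rfl
  · have h1 := Submodule.finrank_add_inf_finrank_orthogonal hFV
    have h2 := Submodule.finrank_add_finrank_orthogonal V
    have h3 := Submodule.finrank_add_finrank_orthogonal F
    omega

theorem margE_lce (hg : IsLogConcaveFn g) (V : Submodule ℝ (EuclideanSpace ℝ (Fin n))) :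
    LCE (margE g V) := by
  have h := hg.lce.comp_linear ((LinearMap.id : EuclideanSpace ℝ (Fin n) →ₗ[ℝ] _).coprod Vᗮ.subtype) 0
  have h2 := h.marginal
  have e : margE g V = fun x => ∫⁻ w : Vᗮ, ENNReal.ofReal (g (x + w)) := rfl
  rw [e]
  simpa using h2

theorem margE_lceV (hg : IsLogConcaveFn g) (V : Submodule ℝ (EuclideanSpace ℝ (Fin n))) :
    LCE fun v : V => margE g V v := by
  simpa using (margE_lce hg V).comp_linear V.subtype 0

theorem margE_one (hg : IsLogConcaveFn g) (hi : Integrable g) (h1 : ∫ x, g x = 1)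
    (V : Submodule ℝ (EuclideanSpace ℝ (Fin n))) : ∫⁻ v : V, margE g V v = 1 := by
  rw [← ENNReal.ofReal_one, ← h1, ofReal_integral_eq_lintegral_ofReal hi (ae_of_all _ hg.1),
    full_tonelli V hi.aemeasurable.ennreal_ofReal]
  rfl

theorem LCE.ne_top {V : Type*} [NormedAddCommGroup V] [InnerProductSpace ℝ V] [FiniteDimensional ℝ V]
    [MeasurableSpace V] [BorelSpace V] {ρ : V → ℝ≥0∞} (hL : LCE ρ) (hone : ∫⁻ v, ρ v = 1) (x0 : V) :
    ρ x0 ≠ ∞ := by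
  intro htop
  have hL2 : AEMeasurable (fun v : V => ρ ((1/2:ℝ) • x0 + (1/2:ℝ) • v)) :=
    (hL.comp_linear ((1/2:ℝ) • LinearMap.id) ((1/2:ℝ) • x0)).aemeasurable _
  have hs : ∫⁻ v : V, ρ ((1/2:ℝ) • x0 + (1/2:ℝ) • v) ≠ ∞ := by
    intro h
    have e := lintegral_haar_smul (volume : Measure V) (c := 1/2) (by norm_num)
      (fun v : V => ρ ((1/2:ℝ) • x0 + v))
    rw [h, ENNReal.mul_top (by simp),
      lintegral_add_left_eq_self ρ ((1/2:ℝ) • x0), hone] at e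
    exact ENNReal.one_ne_top e
  have hae := ae_lt_top' hL2 hs
  have hz : ρ =ᵐ[volume] 0 := by
    filter_upwards [hae] with v hv
    by_contra hne
    simp only [Pi.zero_apply] at hne
    have h2 := hL v x0 (1/2) (by norm_num) (by norm_num)
    rw [htop, ENNReal.top_rpow_of_pos (by norm_num), ENNReal.mul_top] at h2
    · have e : ((1/2:ℝ) • v + (1 - 1/2 : ℝ) • x0 : V) = (1/2:ℝ) • x0 + (1/2:ℝ) • v := by
        rw [add_comm]; norm_num
      rw [e] at h2
      exact absurd hv (not_lt.2 h2)
    · simp [hne]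
  rw [lintegral_congr_ae hz] at hone
  simp at hone

theorem margE_ne_top (hg : IsLogConcaveFn g) (hi : Integrable g) (h1 : ∫ x, g x = 1)
    (V : Submodule ℝ (EuclideanSpace ℝ (Fin n))) (x0 : V) : margE g V x0 ≠ ∞ :=
  (margE_lceV hg V).ne_top (margE_one hg hi h1 V) x0

theorem margR_ofReal (hg : IsLogConcaveFn g) (hi : Integrable g) (h1 : ∫ x, g x = 1)
    (V : Submodule ℝ (EuclideanSpace ℝ (Fin n))) (x : V) : ENNReal.ofReal (margR g V x) = margE g V x :=
  ENNReal.ofReal_toReal (margE_ne_top hg hi h1 V x)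

theorem margR_lc (hg : IsLogConcaveFn g) (hi : Integrable g) (h1 : ∫ x, g x = 1)
    (V : Submodule ℝ (EuclideanSpace ℝ (Fin n))) : IsLogConcaveFn (margR g V) := by
  refine ⟨fun x => ENNReal.toReal_nonneg, fun x y l hl0 hl1 => ?_⟩
  rcases hl0.eq_or_lt with rfl | hl0
  · simp
  rcases hl1.eq_or_lt with rfl | hl1
  · simp
  unfold margR
  rw [ENNReal.toReal_rpow, ENNReal.toReal_rpow, ← ENNReal.toReal_mul]
  exact ENNReal.toReal_mono (margE_ne_top hg hi h1 V _) (margE_lceV hg V x y l hl0 hl1)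

theorem transfer (hg : IsLogConcaveFn g) (hi : Integrable g) (h1 : ∫ x, g x = 1)
    (V : Submodule ℝ (EuclideanSpace ℝ (Fin n))) {h : EuclideanSpace ℝ (Fin n) → ℝ} (h0 : ∀ x, 0 ≤ h x)
    (hm : Measurable h) (hinv : ∀ (v : V) (w : Vᗮ), h (v + w) = h v) :
    ∫⁻ x, ENNReal.ofReal (h x * g x) = ∫⁻ v : V, ENNReal.ofReal (h v * margR g V v) := by
  have hmm : AEMeasurable fun x => ENNReal.ofReal (h x * g x) :=
    (hm.aemeasurable.mul hi.aemeasurable).ennreal_ofReal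
  rw [full_tonelli V hmm]
  refine lintegral_congr fun v => ?_
  simp only [hinv]
  rw [ENNReal.ofReal_mul (h0 _), margR_ofReal hg hi h1]
  simp_rw [ENNReal.ofReal_mul (h0 _)]
  rw [lintegral_const_mul' _ _ ENNReal.ofReal_ne_top]
  rfl

theorem margR_meas (hg : IsLogConcaveFn g) 
    (V : Submodule ℝ (EuclideanSpace ℝ (Fin n))) : AEMeasurable (margR g V) :=
  ((margE_lceV hg V).aemeasurable volume).ennreal_toReal

theorem transfer_int (hg : IsLogConcaveFn g) (hi : Integrable g) (h1 : ∫ x, g x = 1)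
    (V : Submodule ℝ (EuclideanSpace ℝ (Fin n))) {h : EuclideanSpace ℝ (Fin n) → ℝ} (h0 : ∀ x, 0 ≤ h x)
    (hm : Measurable h) (hinv : ∀ (v : V) (w : Vᗮ), h (v + w) = h v) (hhi : Integrable fun x => h x * g x) :
    Integrable (fun v : V => h v * margR g V v) ∧ ∫ v : V, h v * margR g V v = ∫ x, h x * g x := by
  have t := transfer hg hi h1 V h0 hm hinv
  have hmm : AEStronglyMeasurable (fun v : V => h v * margR g V v) :=
    ((hm.comp measurable_subtype_coe).aemeasurable.mul (margR_meas hg V)).aestronglyMeasurable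
  have hnn : ∀ v : V, 0 ≤ h v * margR g V v := fun v => mul_nonneg (h0 _) ENNReal.toReal_nonneg
  have hnn' : ∀ x, 0 ≤ h x * g x := fun v => mul_nonneg (h0 _) (hg.1 _)
  constructor
  · refine ⟨hmm, ?_⟩
    rw [hasFiniteIntegral_iff_ofReal (ae_of_all _ hnn), ← t]
    exact hhi.lintegral_lt_top
  · rw [integral_eq_lintegral_of_nonneg_ae (ae_of_all _ hnn) hmm,
      integral_eq_lintegral_of_nonneg_ae (ae_of_all _ hnn') hhi.aestronglyMeasurable, t]

theorem margR_good (hg : IsLogConcaveFn g) (hi : Integrable g) (h1 : ∫ x, g x = 1)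
    (hb : ∫ x, g x • x = 0) (hQ : 2 ≤ Q) (hr : 0 < r) (hR : 0 < R)
    (hlow : ∀ x : EuclideanSpace ℝ (Fin n), ‖x‖ ≤ r → x ∈ ZplusBody g Q)
    (hup : ∀ x ∈ ZplusBody g Q, ‖x‖ ≤ R)
    (V : Submodule ℝ (EuclideanSpace ℝ (Fin n))) (hd : (Module.finrank ℝ V : ℝ) ≤ 2 * Q) :
    GoodDensity (margR g V) Q r R := by
  have hinv : ∀ (y v : V) (w : Vᗮ), ⟪(v : EuclideanSpace ℝ (Fin n)) + w, (y : EuclideanSpace ℝ (Fin n))⟫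
      = ⟪(v : EuclideanSpace ℝ (Fin n)), (y : EuclideanSpace ℝ (Fin n))⟫ := fun y v w => by
    rw [inner_add_left, Submodule.inner_left_of_mem_orthogonal y.2 w.2, add_zero]
  have hmeas : ∀ y : EuclideanSpace ℝ (Fin n), Measurable fun x : EuclideanSpace ℝ (Fin n) => max ⟪x, y⟫ 0 :=
    fun y => by
    have : Measurable fun x : EuclideanSpace ℝ (Fin n) => ⟪x, y⟫ := by fun_prop
    exact this.max measurable_const
  have T1 := transfer_int hg hi h1 V (h := fun _ => 1) (fun _ => zero_le_one) measurable_const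
    (fun _ _ => rfl) (by simpa using hi)
  have TP := fun y : V => transfer_int hg hi h1 V (h := fun x => max ⟪x, (y : EuclideanSpace ℝ (Fin n))⟫ 0)
    (fun _ => le_max_right _ _) (hmeas y) (fun v w => by simp only [hinv]) (pos_int hQ hr hg.1 hi hlow y)
  have TQ := fun y : V => transfer_int hg hi h1 V (h := fun x => max ⟪x, (y : EuclideanSpace ℝ (Fin n))⟫ 0 ^ Q)
    (fun _ => Real.rpow_nonneg (le_max_right _ _) _) ((hmeas y).pow_const _) (fun v w => by simp only [hinv])
    (zplus_int hQ hr hlow y)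
  refine ⟨margR_lc hg hi h1 V, by simpa using T1.1, by simpa [h1] using T1.2, fun φ => ?_, hQ, hd, hr, hR,
    fun φ => (TQ φ).1, fun φ hφ => ?_, fun φ hφ => ?_⟩
  · let y : V := (InnerProductSpace.toDual ℝ V).symm φ
    have hy : ∀ v : V, φ v = max ⟪(v : EuclideanSpace ℝ (Fin n)), (y : EuclideanSpace ℝ (Fin n))⟫ 0
        - max ⟪(v : EuclideanSpace ℝ (Fin n)), ((-y : V) : EuclideanSpace ℝ (Fin n))⟫ 0 := fun v => by
      have e : φ v = ⟪(v : EuclideanSpace ℝ (Fin n)), (y : EuclideanSpace ℝ (Fin n))⟫ := by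
        have : ⟪y, v⟫ = φ v := by simp [y]
        rw [← this, real_inner_comm]; rfl
      rw [e, Submodule.coe_neg, inner_neg_right]
      generalize ⟪(v : EuclideanSpace ℝ (Fin n)), (y : EuclideanSpace ℝ (Fin n))⟫ = a
      rcases le_total a 0 with h | h
      · rw [max_eq_right h, max_eq_left (by linarith)]; ring
      · rw [max_eq_left h, max_eq_right (by linarith)]; ring
    simp_rw [hy, sub_mul]
    refine ⟨(TP y).1.sub (TP (-y)).1, ?_⟩
    rw [integral_sub (TP y).1 (TP (-y)).1, (TP y).2, (TP (-y)).2, sub_eq_zero]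
    exact pos_bary hQ hr hg.1 hi hb hlow y
  · have e := (TQ φ).2
    have := zplus_lo hQ hr hg.1 hlow φ hφ
    rw [← e] at this
    exact this
  · have e := (TQ φ).2
    have := zplus_hi hQ hr hg.1 hi.aemeasurable hlow hup φ hφ
    rw [← e] at this
    exact this
end Marg

section Polar
variable {X : Type*} [NormedAddCommGroup X] [InnerProductSpace ℝ X] [FiniteDimensional ℝ X]

theorem polar_isometry (Y Y' : Submodule ℝ X) (hd : Module.finrank ℝ Y' = Module.finrank ℝ Y) {ε : ℝ} (hε : 0 ≤ ε)
    (hap : ∀ y ∈ Y, ∃ y' ∈ Y', ‖y - y'‖ ≤ ε * ‖y‖) :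
    ∃ O : Y ≃ₗᵢ[ℝ] Y', ∀ y : Y, ‖(y : X) - O y‖ ≤ 2 * ε * ‖y‖ := by
  let S : Y →ₗ[ℝ] Y' := (Y'.orthogonalProjection : X →ₗ[ℝ] Y').comp Y.subtype
  have hS : ∀ y : Y, ‖(y : X) - S y‖ ≤ ε * ‖y‖ := by
    intro y
    obtain ⟨y', hy', h⟩ := hap y y.2
    refine le_trans ?_ h
    have e : ((S y : Y') : X) = Y'.starProjection (y : X) := rfl
    rw [e, Submodule.starProjection_minimal]
    exact ciInf_le ⟨0, by rintro _ ⟨z, rfl⟩; positivity⟩ (⟨y', hy'⟩ : Y')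
  clear_value S
  have hT := LinearMap.isSymmetric_adjoint_comp_self S
  let e := hT.eigenvectorBasis rfl
  have hin : ∀ i j, ⟪S (e i), S (e j)⟫ = if i = j then hT.eigenvalues rfl i else 0 := by
    intro i j
    have h1 := hT.apply_eigenvectorBasis rfl i
    rw [← LinearMap.adjoint_inner_left]
    have h2 : S.adjoint (S (e i)) = hT.eigenvalues rfl i • e i := h1
    rw [h2, real_inner_smul_left, orthonormal_iff_ite.1 e.orthonormal i j]
    split_ifs <;> simp
  have horth : ∀ i j, i ≠ j → ⟪S (e i), S (e j)⟫ = 0 := fun i j h => by rw [hin, if_neg h]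
  let w : Fin (Module.finrank ℝ Y) → Y' := fun i => ‖S (e i)‖⁻¹ • S (e i)
  let s : Set (Fin (Module.finrank ℝ Y)) := {i | S (e i) ≠ 0}
  have hw : Orthonormal ℝ (s.restrict w) := by
    constructor
    · rintro ⟨i, hi⟩
      have hi' : S (e i) ≠ 0 := hi
      change ‖‖S (e i)‖⁻¹ • S (e i)‖ = 1
      rw [norm_smul, norm_inv, norm_norm, inv_mul_cancel₀ (norm_ne_zero_iff.2 hi')]
    · rintro ⟨i, hi⟩ ⟨j, hj⟩ hij
      change ⟪‖S (e i)‖⁻¹ • S (e i), ‖S (e j)‖⁻¹ • S (e j)⟫ = 0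
      rw [real_inner_smul_left, real_inner_smul_right, horth i j (fun h => hij (Subtype.ext h))]
      simp
  obtain ⟨b, hb⟩ := hw.exists_orthonormalBasis_extension_of_card_eq (by simpa using hd)
  have hSe : ∀ i, S (e i) = ‖S (e i)‖ • b i := by
    intro i
    by_cases h : S (e i) = 0
    · simp [h]
    · rw [hb i h]
      simp only [w]
      rw [smul_smul, mul_inv_cancel₀ (norm_ne_zero_iff.2 h), one_smul]
  let O : Y ≃ₗᵢ[ℝ] Y' := e.equiv b (Equiv.refl _)
  have hOe : ∀ i, O (e i) = b i := fun i => by simp [O]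
  refine ⟨O, fun y => ?_⟩
  have hbS : ∀ i, ⟪b i, S y⟫ = ‖S (e i)‖ * ⟪e i, y⟫ := by
    intro i
    conv_lhs => rw [← e.sum_repr' y]
    rw [map_sum, inner_sum, Finset.sum_eq_single i]
    · rw [map_smul, hSe, real_inner_smul_right, real_inner_smul_right, real_inner_self_eq_norm_sq,
        b.orthonormal.1 i, ← hSe]; ring
    · intro j _ hj
      rw [map_smul, hSe, real_inner_smul_right, real_inner_smul_right, b.orthonormal.2 hj.symm]; simp
    · simp
  have hbO : ∀ i, ⟪b i, O y⟫ = ⟪e i, y⟫ := fun i => by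
    rw [← hOe, LinearIsometryEquiv.inner_map_map]
  have hσ : ∀ i, |1 - ‖S (e i)‖| ≤ ε := by
    intro i
    have h1 := hS (e i)
    have h2 := abs_norm_sub_norm_le ((e i : Y) : X) (S (e i) : X)
    have h3 : ‖((e i : Y) : X)‖ = 1 := e.orthonormal.1 i
    have h4 : ‖e i‖ = 1 := e.orthonormal.1 i
    rw [h3] at h2
    rw [h4] at h1
    have h5 : ‖((S (e i) : Y') : X)‖ = ‖S (e i)‖ := rfl
    rw [h5] at h2
    linarith
  have hOS : ‖S y - O y‖ ≤ ε * ‖y‖ := by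
    refine le_of_sq_le_sq ?_ (by positivity)
    rw [← b.sum_sq_norm_inner_right, mul_pow, ← e.sum_sq_norm_inner_right, Finset.mul_sum]
    refine Finset.sum_le_sum fun i _ => ?_
    rw [inner_sub_right, hbS, hbO, ← mul_pow]
    refine pow_le_pow_left₀ (norm_nonneg _) ?_ 2
    rw [show ‖S (e i)‖ * ⟪e i, y⟫ - ⟪e i, y⟫ = -((1 - ‖S (e i)‖) * ⟪e i, y⟫) by ring, norm_neg, norm_mul]
    exact mul_le_mul_of_nonneg_right (hσ i) (norm_nonneg _)
  calc ‖(y : X) - O y‖ = ‖((y : X) - S y) + ((S y - O y : Y') : X)‖ := by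
        rw [Submodule.coe_sub]; congr 1; abel
    _ ≤ ‖(y : X) - S y‖ + ‖((S y - O y : Y') : X)‖ := norm_add_le _ _
    _ ≤ ε * ‖y‖ + ε * ‖y‖ := add_le_add (hS y) hOS
    _ = _ := by ring
end Polar

section ConeQ
variable {Y : Type*} [NormedAddCommGroup Y] [InnerProductSpace ℝ Y] [FiniteDimensional ℝ Y]
  [MeasurableSpace Y] [BorelSpace Y]

theorem cone_qmp : Measure.QuasiMeasurePreserving (fun p : ℝ × Y => (p.1, p.1 • p.2))
    ((volume.restrict (Set.Ioi (0:ℝ))).prod (volume : Measure Y)) (volume.prod (volume : Measure Y)) := by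
  have hm : Measurable (fun p : ℝ × Y => (p.1, p.1 • p.2)) := by fun_prop
  refine ⟨hm, Measure.AbsolutelyContinuous.mk fun s hs h0 => ?_⟩
  rw [Measure.map_apply hm hs, Measure.measure_prod_null (hm hs)]
  rw [Measure.measure_prod_null hs] at h0
  have h0' := ae_restrict_of_ae (s := Set.Ioi (0:ℝ)) h0
  filter_upwards [h0', ae_restrict_mem measurableSet_Ioi] with t ht ht0
  have ht0' : (0:ℝ) < t := ht0
  have e : Prod.mk t ⁻¹' ((fun p : ℝ × Y => (p.1, p.1 • p.2)) ⁻¹' s) = (fun z : Y => t • z) ⁻¹' (Prod.mk t ⁻¹' s) := rfl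
  rw [e]
  simp only [Pi.zero_apply] at ht ⊢
  rw [Measure.addHaar_preimage_smul _ ht0'.ne', ht, mul_zero]
end ConeQ

section Cone
variable {V : Type*} [NormedAddCommGroup V] [InnerProductSpace ℝ V] [FiniteDimensional ℝ V]
  [MeasurableSpace V] [BorelSpace V] {f : V → ℝ} {Q r R : ℝ}
variable {Y : Type*} [NormedAddCommGroup Y] [InnerProductSpace ℝ Y] [FiniteDimensional ℝ Y]
  [MeasurableSpace Y] [BorelSpace Y]

def Phi (f : V → ℝ) (θ : V) (ι : Y →ₗᵢ[ℝ] V) (q : ℝ) : ℝ≥0∞ :=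
  ∫⁻ t in Set.Ioi (0:ℝ), ENNReal.ofReal (t ^ (q - 1)) * ∫⁻ y : Y, ENNReal.ofReal (f (t • θ + ι y))

theorem Phi_eq (hf : IsLogConcaveFn f) (θ : V) (ι : Y →ₗᵢ[ℝ] V) (q : ℝ) :
    Phi f θ ι q = ∫⁻ z : Y, ∫⁻ t in Set.Ioi (0:ℝ), ENNReal.ofReal (t ^ (q + Module.finrank ℝ Y - 1)) *
      ENNReal.ofReal (f (t • (θ + ι z))) := by
  unfold Phi
  have hF : AEMeasurable (fun p : ℝ × Y => ENNReal.ofReal (f (p.1 • θ + ι p.2))) (volume.prod volume) := by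
    have h := hf.lce.comp_linear ((LinearMap.toSpanSingleton ℝ V θ).coprod ι.toLinearMap) 0
    have h2 := h.aemeasurable ((volume : Measure ℝ).prod (volume : Measure Y))
    simpa using h2
  have hG := hF.comp_quasiMeasurePreserving (cone_qmp (Y := Y))
  rw [lintegral_lintegral_swap (f := fun z t => ENNReal.ofReal (t ^ (q + Module.finrank ℝ Y - 1)) *
      ENNReal.ofReal (f (t • (θ + ι z))))]
  · refine setLIntegral_congr_fun measurableSet_Ioi fun t ht => ?_
    have ht0 : (0:ℝ) < t := ht
    rw [lintegral_haar_smul (volume : Measure Y) ht0, ← mul_assoc, ← ENNReal.ofReal_mul (by positivity),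
      lintegral_const_mul' _ _ ENNReal.ofReal_ne_top]
    congr 2
    · rw [← Real.rpow_natCast, ← Real.rpow_add ht0]; congr 1; ring
    · funext z; rw [map_smul, smul_add]
  · have h1 : AEMeasurable (fun p : ℝ × Y => ENNReal.ofReal (p.1 ^ (q + Module.finrank ℝ Y - 1)) *
        ENNReal.ofReal (f (p.1 • (θ + ι p.2)))) ((volume.restrict (Set.Ioi (0:ℝ))).prod (volume : Measure Y)) := by
      refine AEMeasurable.mul ((meas_pow _).comp measurable_fst).aemeasurable ?_
      refine hG.congr (ae_of_all _ fun p => ?_)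
      simp only [Function.comp, map_smul, smul_add]
    exact h1.prod_swap

theorem norm_eta {θ : V} {ι : Y →ₗᵢ[ℝ] V} (hθ : ‖θ‖ = 1) (ho : ∀ z, ⟪θ, ι z⟫ = 0) (z : Y) :
    1 ≤ ‖θ + ι z‖ ∧ ‖z‖ ≤ ‖θ + ι z‖ ∧ ‖θ + ι z‖ ≤ 1 + ‖z‖ := by
  have h := norm_add_sq_real θ (ι z)
  rw [ho, hθ, ι.norm_map] at h
  refine ⟨?_, ?_, ?_⟩
  · refine le_of_sq_le_sq ?_ (norm_nonneg _)
    nlinarith [sq_nonneg ‖z‖]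
  · refine le_of_sq_le_sq ?_ (norm_nonneg _)
    nlinarith
  · refine (norm_add_le _ _).trans ?_
    rw [hθ, ι.norm_map]

theorem cone_comp [Nontrivial V] (H : GoodDensity f Q r R) {θ θ' : V} {ι ι' : Y →ₗᵢ[ℝ] V}
    (hθ : ‖θ‖ = 1) (ho : ∀ z, ⟪θ, ι z⟫ = 0) {ε q : ℝ} (hε : 0 ≤ ε)
    (hθ' : ‖θ' - θ‖ ≤ ε) (hι : ∀ z, ‖ι' z - ι z‖ ≤ 2 * ε * ‖z‖)
    (hq : 1 ≤ q) (hq3 : q + Module.finrank ℝ Y ≤ 3 * Q) :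
    ENNReal.ofReal (Real.exp (-(208 * (16 * Real.exp (11 / 2)) * Q * (R / r) * (3 * ε)))) * Phi f θ ι q
      ≤ Phi f θ' ι' q := by
  rw [Phi_eq H.lc, Phi_eq H.lc, ← lintegral_const_mul' _ _ ENNReal.ofReal_ne_top]
  refine lintegral_mono fun z => ?_
  obtain ⟨h1, h2, -⟩ := norm_eta hθ ho z
  have hd : (0:ℝ) ≤ Module.finrank ℝ Y := Nat.cast_nonneg _
  refine H.ray_comp (η := θ + ι z) (η' := θ' + ι' z) ?_ (by linarith) hq3 ?_
  · intro h; rw [h, norm_zero] at h1; linarith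
  · calc ‖θ' + ι' z - (θ + ι z)‖ = ‖(θ' - θ) + (ι' z - ι z)‖ := by congr 1; abel
      _ ≤ ‖θ' - θ‖ + ‖ι' z - ι z‖ := norm_add_le _ _
      _ ≤ ε + 2 * ε * ‖z‖ := add_le_add hθ' (hι z)
      _ ≤ _ := by nlinarith

theorem Phi_ne_top (H : GoodDensity f Q r R) {θ : V} {ι : Y →ₗᵢ[ℝ] V}
    (hθ : ‖θ‖ = 1) (ho : ∀ z, ⟪θ, ι z⟫ = 0) {q : ℝ}
    (hq : 1 ≤ q) (hq3 : q + Module.finrank ℝ Y ≤ 3 * Q) : Phi f θ ι q ≠ ∞ := by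
  rw [Phi_eq H.lc]
  have hd : (0:ℝ) ≤ Module.finrank ℝ Y := Nat.cast_nonneg _
  have h0 := H.zpos
  have hR := H.Rpos
  set s := q + Module.finrank ℝ Y with hs
  set A := 16 * Real.exp (11 / 2) * R with hA
  have hA0 : 0 < A := by positivity
  have hfin : ∫⁻ z : Y, ENNReal.ofReal ((1 + ‖z‖) ^ (-s)) < ∞ :=
    finite_integral_one_add_norm (by linarith)
  refine ne_top_of_le_ne_top (ENNReal.mul_ne_top (a := ENNReal.ofReal (2 * (Real.exp (3 * Q) * f 0) * (2 * A) ^ s))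
    ENNReal.ofReal_ne_top hfin.ne) ?_
  rw [← lintegral_const_mul' _ _ ENNReal.ofReal_ne_top]
  refine lintegral_mono fun z => ?_
  obtain ⟨h1, h2, -⟩ := norm_eta hθ ho z
  have hn : 0 < ‖θ + ι z‖ := by linarith
  refine (H.ray_le (η := θ + ι z) (σ := s - 1) (norm_pos_iff.1 hn) (by linarith) (by linarith)).trans ?_
  rw [← ENNReal.ofReal_ofNat 2, ← ENNReal.ofReal_mul (by norm_num), ← ENNReal.ofReal_mul (by positivity)]
  apply ENNReal.ofReal_le_ofReal
  have hz : 0 < 1 + ‖z‖ := by positivity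
  have e1 : (A / ‖θ + ι z‖) ^ (s - 1) * (A / ‖θ + ι z‖) = (A / ‖θ + ι z‖) ^ s := by
    rw [Real.rpow_sub_one (by positivity)]; field_simp
  have e2 : (A / ‖θ + ι z‖) ^ s ≤ (2 * A / (1 + ‖z‖)) ^ s := by
    refine Real.rpow_le_rpow (by positivity) ?_ (by linarith)
    rw [div_le_div_iff₀ hn hz]
    nlinarith
  have e3 : (2 * A / (1 + ‖z‖)) ^ s = (2 * A) ^ s * (1 + ‖z‖) ^ (-s) := by
    rw [Real.div_rpow (by positivity) hz.le, Real.rpow_neg hz.le, div_eq_mul_inv]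
  calc 2 * ((A / ‖θ + ι z‖) ^ (s - 1) * (Real.exp (3 * Q) * f 0) * (A / ‖θ + ι z‖))
      = 2 * (Real.exp (3 * Q) * f 0) * ((A / ‖θ + ι z‖) ^ (s - 1) * (A / ‖θ + ι z‖)) := by ring
    _ ≤ 2 * (Real.exp (3 * Q) * f 0) * ((2 * A) ^ s * (1 + ‖z‖) ^ (-s)) := by
        rw [e1, ← e3]; gcongr
    _ = _ := by ring

theorem Phi_ne_zero [Nontrivial V] (H : GoodDensity f Q r R) {θ : V} {ι : Y →ₗᵢ[ℝ] V}
    (hθ : ‖θ‖ = 1) (ho : ∀ z, ⟪θ, ι z⟫ = 0) {q : ℝ}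
    (hq : 1 ≤ q) : Phi f θ ι q ≠ 0 := by
  rw [Phi_eq H.lc]
  have hd : (0:ℝ) ≤ Module.finrank ℝ Y := Nat.cast_nonneg _
  have h0 := H.zpos
  have hr := H.rpos
  set s := q + Module.finrank ℝ Y with hs
  set c := ENNReal.ofReal ((r / 32) ^ (s - 1)) * ENNReal.ofReal (Real.exp (-(6 * Q)) * f 0) with hc
  have hc0 : c ≠ 0 := by
    rw [hc]
    refine mul_ne_zero ?_ ?_
    · have : 0 < (r / 32) ^ (s - 1) := by positivity
      simpa using this
    · have : 0 < Real.exp (-(6 * Q)) * f 0 := by positivity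
      simpa using this
  have hle : c * ENNReal.ofReal (r / 32) * volume (Metric.ball (0:Y) 1) ≤
      ∫⁻ z : Y, ∫⁻ t in Set.Ioi (0:ℝ), ENNReal.ofReal (t ^ (s - 1)) * ENNReal.ofReal (f (t • (θ + ι z))) := by
    rw [← setLIntegral_const]
    refine le_trans (setLIntegral_mono' measurableSet_ball fun z hz => ?_) (setLIntegral_le_lintegral _ _)
    have hz1 : ‖z‖ < 1 := by simpa using hz
    obtain ⟨-, -, h3⟩ := norm_eta hθ ho z
    have hv : ENNReal.ofReal (r / 32) = volume (Set.Icc (r / 32) (r / 16)) := by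
      rw [Real.volume_Icc]; congr 1; ring
    rw [hv, ← setLIntegral_const]
    refine le_trans (setLIntegral_mono' measurableSet_Icc fun t ht => ?_)
      (lintegral_mono_set (t := Set.Ioi (0:ℝ)) fun t ht => lt_of_lt_of_le (by positivity : (0:ℝ) < r / 32) ht.1)
    have ht0 : 0 < t := lt_of_lt_of_le (by positivity) ht.1
    refine mul_le_mul' (ENNReal.ofReal_le_ofReal ?_) (ENNReal.ofReal_le_ofReal ?_)
    · exact Real.rpow_le_rpow (by positivity) ht.1 (by linarith)
    · refine H.ball_ge ?_
      rw [norm_smul, Real.norm_of_nonneg ht0.le]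
      have := ht.2
      nlinarith
  intro h
  rw [h] at hle
  have hb : volume (Metric.ball (0:Y) 1) ≠ 0 := (Metric.measure_ball_pos volume _ one_pos).ne'
  have hrr : ENNReal.ofReal (r / 32) ≠ 0 := by
    have : 0 < r / 32 := by positivity
    simpa using this
  exact mul_ne_zero (mul_ne_zero hc0 hrr) hb (le_antisymm hle (zero_le))
end Cone

section Mat
variable {n : ℕ}

theorem hs_bound (A : Matrix (Fin n) (Fin n) ℝ) (x : EuclideanSpace ℝ (Fin n)) :
    ‖Matrix.toEuclideanLin A x‖ ≤ hsNorm A * ‖x‖ := by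
  rw [EuclideanSpace.norm_eq, EuclideanSpace.norm_eq, hsNorm, ← Real.sqrt_mul (by positivity)]
  apply Real.sqrt_le_sqrt
  rw [Finset.sum_mul]
  refine Finset.sum_le_sum fun i _ => ?_
  have e : (Matrix.toEuclideanLin A x) i = ∑ j, A i j * x j := by
    simp [Matrix.toLpLin_apply, Matrix.mulVec, dotProduct]
  rw [e, Real.norm_eq_abs, sq_abs]
  refine (Finset.sum_mul_sq_le_sq_mul_sq _ _ _).trans (le_of_eq ?_)
  simp

theorem orth_inner {u : Matrix (Fin n) (Fin n) ℝ} (hu : u.transpose * u = 1) (x y : EuclideanSpace ℝ (Fin n)) :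
    ⟪Matrix.toEuclideanLin u x, Matrix.toEuclideanLin u y⟫ = ⟪x, y⟫ := by
  have h : (Matrix.toEuclideanLin u).adjoint (Matrix.toEuclideanLin u y) = y := by
    rw [← Matrix.toEuclideanLin_conjTranspose_eq_adjoint, Matrix.conjTranspose_eq_transpose_of_trivial]
    simp [Matrix.toLpLin_apply, hu]
  rw [← LinearMap.adjoint_inner_right, h]

theorem orth_norm {u : Matrix (Fin n) (Fin n) ℝ} (hu : u.transpose * u = 1) (x : EuclideanSpace ℝ (Fin n)) :
    ‖Matrix.toEuclideanLin u x‖ = ‖x‖ := by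
  rw [norm_eq_sqrt_real_inner, orth_inner hu, ← norm_eq_sqrt_real_inner]

theorem orth_finrank {u : Matrix (Fin n) (Fin n) ℝ} (hu : u.transpose * u = 1)
    (E₀ : Submodule ℝ (EuclideanSpace ℝ (Fin n))) :
    Module.finrank ℝ (Submodule.map (Matrix.toEuclideanLin u) E₀) = Module.finrank ℝ E₀ := by
  refine (Submodule.equivMapOfInjective _ ?_ E₀).finrank_eq.symm
  rw [injective_iff_map_eq_zero]
  intro x hx
  rw [← norm_eq_zero, ← orth_norm hu, hx, norm_zero]

theorem mat_approx {u v : Matrix (Fin n) (Fin n) ℝ} (hv : v.transpose * v = 1)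
    (E₀ V : Submodule ℝ (EuclideanSpace ℝ (Fin n))) (hV : Submodule.map (Matrix.toEuclideanLin v) E₀ ≤ V)
    (y : EuclideanSpace ℝ (Fin n)) (hy : y ∈ (Submodule.map (Matrix.toEuclideanLin u) E₀)ᗮ ⊓ V) :
    ∃ y' ∈ (Submodule.map (Matrix.toEuclideanLin v) E₀)ᗮ ⊓ V, ‖y - y'‖ ≤ hsNorm (u - v) * ‖y‖ := by
  set F' := Submodule.map (Matrix.toEuclideanLin v) E₀ with hF'
  have hz : F'.starProjection y ∈ F' := Submodule.starProjection_apply_mem _ _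
  refine ⟨y - F'.starProjection y, ⟨Submodule.sub_starProjection_mem_orthogonal y, V.sub_mem hy.2 (hV hz)⟩, ?_⟩
  rw [sub_sub_cancel]
  have horth : ⟪F'.starProjection y, y - F'.starProjection y⟫ = 0 :=
    Submodule.inner_right_of_mem_orthogonal hz (Submodule.sub_starProjection_mem_orthogonal y)
  rw [inner_sub_right, sub_eq_zero, real_inner_self_eq_norm_sq] at horth
  obtain ⟨e, he, hez⟩ := hz
  rw [← hez] at horth ⊢
  rw [orth_norm hv] at horth ⊢
  have hu0 : ⟪Matrix.toEuclideanLin u e, y⟫ = 0 :=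
    Submodule.inner_right_of_mem_orthogonal (Submodule.mem_map_of_mem he) hy.1
  have h1 : ‖e‖ ^ 2 ≤ hsNorm (u - v) * ‖e‖ * ‖y‖ := by
    calc ‖e‖ ^ 2 = ⟪Matrix.toEuclideanLin v e - Matrix.toEuclideanLin u e, y⟫ := by
          rw [inner_sub_left, hu0, sub_zero, horth]
      _ ≤ ‖Matrix.toEuclideanLin v e - Matrix.toEuclideanLin u e‖ * ‖y‖ := real_inner_le_norm _ _
      _ = ‖Matrix.toEuclideanLin (u - v) e‖ * ‖y‖ := by
          rw [norm_sub_rev, map_sub, LinearMap.sub_apply]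
      _ ≤ _ := by gcongr; exact hs_bound _ _
  by_cases he0 : ‖e‖ = 0
  · rw [he0]; exact mul_nonneg (Real.sqrt_nonneg _) (norm_nonneg _)
  · have : 0 < ‖e‖ := lt_of_le_of_ne (norm_nonneg _) (Ne.symm he0)
    refine le_of_mul_le_mul_left ?_ this
    linarith
end Mat

section Fin
variable {n : ℕ} {g : EuclideanSpace ℝ (Fin n) → ℝ} {Q r R : ℝ}

def inclY (F V : Submodule ℝ (EuclideanSpace ℝ (Fin n))) :
    (Fᗮ ⊓ V : Submodule ℝ (EuclideanSpace ℝ (Fin n))) →ₗᵢ[ℝ] V :=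
  ⟨Submodule.inclusion inf_le_right, fun _ => rfl⟩

theorem marginalDensity_eq (hg : IsLogConcaveFn g) (F : Submodule ℝ (EuclideanSpace ℝ (Fin n)))
    (x : EuclideanSpace ℝ (Fin n)) : marginalDensity g F x = (margE g F x).toReal := by
  unfold marginalDensity margE
  refine integral_eq_lintegral_of_nonneg_ae (ae_of_all _ fun y => hg.1 _) ?_
  have hm : AEMeasurable fun w : Fᗮ => ENNReal.ofReal (g (x + w)) :=
    (hg.lce.comp_linear Fᗮ.subtype x).aemeasurable _
  refine (hm.ennreal_toReal.congr (ae_of_all _ fun w => ?_)).aestronglyMeasurable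
  exact ENNReal.toReal_ofReal (hg.1 _)

theorem Phi_margE (hg : IsLogConcaveFn g) (hi : Integrable g) (h1 : ∫ x, g x = 1)
    {F V : Submodule ℝ (EuclideanSpace ℝ (Fin n))} (hFV : F ≤ V) (θ : V) (q : ℝ) :
    Phi (margR g V) θ (inclY F V) q =
      ∫⁻ t in Set.Ioi (0:ℝ), ENNReal.ofReal (t ^ (q - 1)) * margE g F (t • (θ : EuclideanSpace ℝ (Fin n))) := by
  unfold Phi
  refine lintegral_congr fun t => ?_
  rw [margE_tonelli V F hFV hg]
  congr 1
  refine lintegral_congr fun y => ?_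
  rw [margR_ofReal hg hi h1]
  rfl

theorem int_eq_Phi (hg : IsLogConcaveFn g) (hi : Integrable g) (h1 : ∫ x, g x = 1)
    {F V : Submodule ℝ (EuclideanSpace ℝ (Fin n))} (hFV : F ≤ V) (θ : V) (q : ℝ)
    (hfin : Phi (margR g V) θ (inclY F V) q ≠ ∞) :
    ∫ t in Set.Ioi (0:ℝ), t ^ (q - 1) * marginalDensity g F (t • (θ : EuclideanSpace ℝ (Fin n)))
      = (Phi (margR g V) θ (inclY F V) q).toReal := by
  rw [Phi_margE hg hi h1 hFV] at hfin ⊢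
  have hm : Measurable fun t : ℝ => ENNReal.ofReal (t ^ (q - 1)) * margE g F (t • (θ : EuclideanSpace ℝ (Fin n))) := by
    refine (meas_pow _).mul ?_
    have := ((margE_lce hg F).comp_linear (LinearMap.toSpanSingleton ℝ _ (θ : EuclideanSpace ℝ (Fin n))) 0).measurable_real
    simpa using this
  rw [← integral_toReal hm.aemeasurable (ae_lt_top hm hfin)]
  refine setIntegral_congr_fun measurableSet_Ioi fun t ht => ?_
  have ht0 : (0:ℝ) < t := ht
  simp only [ENNReal.toReal_mul]
  rw [marginalDensity_eq hg, ENNReal.toReal_ofReal (by positivity)]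

theorem Phi_comp {V Y Y' : Type*} [NormedAddCommGroup V] [InnerProductSpace ℝ V]
    [NormedAddCommGroup Y] [InnerProductSpace ℝ Y] [FiniteDimensional ℝ Y] [MeasurableSpace Y] [BorelSpace Y]
    [NormedAddCommGroup Y'] [InnerProductSpace ℝ Y'] [FiniteDimensional ℝ Y'] [MeasurableSpace Y'] [BorelSpace Y']
    (f : V → ℝ) (θ : V) (ι : Y' →ₗᵢ[ℝ] V) (O : Y ≃ₗᵢ[ℝ] Y') (q : ℝ) :
    Phi f θ (ι.comp O.toLinearIsometry) q = Phi f θ ι q := by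
  unfold Phi
  refine lintegral_congr fun t => ?_
  congr 1
  exact O.measurePreserving.lintegral_comp_emb O.toHomeomorph.measurableEmbedding
    (fun y => ENNReal.ofReal (f (t • θ + ι y)))

theorem sphereVol_pos {k : ℕ} (hk : 2 ≤ k) : 0 < sphereVol k := by
  unfold sphereVol
  have : (0:ℝ) < k := by exact_mod_cast (by omega : 0 < k)
  have := Real.Gamma_pos_of_pos (by positivity : (0:ℝ) < (k:ℝ) / 2)
  have := Real.pi_pos
  positivity

theorem log_step {a b : ℝ≥0∞} (ha : a ≠ 0) (ha' : a ≠ ∞) (hb' : b ≠ ∞) {K : ℝ}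
    (h : ENNReal.ofReal (Real.exp (-K)) * a ≤ b) : Real.log a.toReal - Real.log b.toReal ≤ K := by
  have h1 := ENNReal.toReal_mono hb' h
  rw [ENNReal.toReal_mul, ENNReal.toReal_ofReal (Real.exp_pos _).le] at h1
  have hap := ENNReal.toReal_pos ha ha'
  have h2 := Real.log_le_log (by positivity) h1
  rw [Real.log_mul (Real.exp_pos _).ne' hap.ne', Real.log_exp] at h2
  linarith

end Fin

/-- log-Lipschitz estimate for `h_{k,p}` in terms of the geometric distance
of `Z⁺_{max(k,p)}(g)` to the Euclidean ball. -/
theorem statement9 :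
    ∃ C : ℝ, 0 < C ∧
      ∀ (n : ℕ) (g : EuclideanSpace ℝ (Fin n) → ℝ),
        IsLogConcaveFn g → Integrable g → (∫ x, g x) = 1 →
        (∫ x, g x • x) = 0 →
        ∀ k : ℕ, 2 ≤ k → k ≤ n →
        ∀ p : ℝ, -(k : ℝ) + 1 ≤ p →
        ∀ r R : ℝ, 0 < r → 0 < R →
          (∀ x : EuclideanSpace ℝ (Fin n), ‖x‖ ≤ r → x ∈ ZplusBody g (max (k : ℝ) p)) →
          (∀ x ∈ ZplusBody g (max (k : ℝ) p), ‖x‖ ≤ R) →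
          ∀ E₀ : Submodule ℝ (EuclideanSpace ℝ (Fin n)), Module.finrank ℝ E₀ = k →
          ∀ θ₀ : EuclideanSpace ℝ (Fin n), θ₀ ∈ E₀ → ‖θ₀‖ = 1 →
          ∀ u v : Matrix (Fin n) (Fin n) ℝ,
            u.transpose * u = 1 → u.det = 1 → v.transpose * v = 1 → v.det = 1 →
            |Real.log (hkp g E₀ θ₀ k p u) - Real.log (hkp g E₀ θ₀ k p v)| ≤
              C * max (k : ℝ) p * (R / r) * hsNorm (u - v) := by
  refine ⟨208 * (16 * Real.exp (11 / 2)) * 3, by positivity, ?_⟩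
  intro n g hg hi h1 hb k hk2 hkn p hp r R hr hR hlow hup E₀ hE₀ θ₀ hθ₀ hθ₀n u v hu _ hv _
  set Q := max (k : ℝ) p with hQdef
  have hkQ : (k:ℝ) ≤ Q := le_max_left _ _
  have hpQ : p ≤ Q := le_max_right _ _
  have hk2' : (2:ℝ) ≤ k := by exact_mod_cast hk2
  have hQ : 2 ≤ Q := le_trans hk2' hkQ
  set ε := hsNorm (u - v) with hε
  have hε0 : 0 ≤ ε := Real.sqrt_nonneg _
  set F := Submodule.map (Matrix.toEuclideanLin u) E₀ with hF
  set F' := Submodule.map (Matrix.toEuclideanLin v) E₀ with hF'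
  have hFk : Module.finrank ℝ F = k := (orth_finrank hu E₀).trans hE₀
  have hFk' : Module.finrank ℝ F' = k := (orth_finrank hv E₀).trans hE₀
  set V := F ⊔ F' with hV
  have hFV : F ≤ V := le_sup_left
  have hFV' : F' ≤ V := le_sup_right
  have hVdim : Module.finrank ℝ V ≤ k + k := by
    have := Submodule.finrank_add_le_finrank_add_finrank F F'
    rw [hFk, hFk'] at this
    exact this
  have hY := Submodule.finrank_add_inf_finrank_orthogonal hFV
  have hY' := Submodule.finrank_add_inf_finrank_orthogonal hFV'
  have hθF : mApp u θ₀ ∈ F := Submodule.mem_map_of_mem hθ₀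
  have hθF' : mApp v θ₀ ∈ F' := Submodule.mem_map_of_mem hθ₀
  let θ : V := ⟨mApp u θ₀, hFV hθF⟩
  let θ' : V := ⟨mApp v θ₀, hFV' hθF'⟩
  have hθ : ‖θ‖ = 1 := (orth_norm hu θ₀).trans hθ₀n
  have hθ' : ‖θ'‖ = 1 := (orth_norm hv θ₀).trans hθ₀n
  haveI : Nontrivial V := ⟨⟨θ, 0, fun h => by rw [h, norm_zero] at hθ; exact zero_ne_one hθ⟩⟩
  have hdim : (Module.finrank ℝ V : ℝ) ≤ 2 * Q := by
    have : (Module.finrank ℝ V : ℝ) ≤ k + k := by exact_mod_cast hVdim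
    linarith
  have H : GoodDensity (margR g V) Q r R := margR_good hg hi h1 hb hQ hr hR hlow hup V hdim
  obtain ⟨O, hO⟩ := polar_isometry (Fᗮ ⊓ V) (F'ᗮ ⊓ V) (by omega) hε0 (mat_approx hv E₀ V hFV')
  let ι := inclY F V
  let ι' := (inclY F' V).comp O.toLinearIsometry
  have ho : ∀ z, ⟪θ, ι z⟫ = 0 := fun z => Submodule.inner_right_of_mem_orthogonal (K := F) (u := mApp u θ₀) (v := (z : EuclideanSpace ℝ (Fin n))) hθF z.2.1
  have ho' : ∀ z, ⟪θ', ι' z⟫ = 0 := fun z => Submodule.inner_right_of_mem_orthogonal (K := F') (u := mApp v θ₀) (v := ((O z : _) : EuclideanSpace ℝ (Fin n))) hθF' (O z).2.1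
  have hq : 1 ≤ p + (k:ℝ) := by linarith
  have hq3 : p + (k:ℝ) + Module.finrank ℝ (Fᗮ ⊓ V : Submodule ℝ (EuclideanSpace ℝ (Fin n))) ≤ 3 * Q := by
    have : (Module.finrank ℝ (Fᗮ ⊓ V : Submodule ℝ (EuclideanSpace ℝ (Fin n))) : ℝ) ≤ k := by
      exact_mod_cast (by omega)
    linarith
  have hθd : ‖θ' - θ‖ ≤ ε := by
    have h := hs_bound (u - v) θ₀
    rw [hθ₀n, mul_one, map_sub, LinearMap.sub_apply, norm_sub_rev] at h
    exact h
  have hιd : ∀ z, ‖ι' z - ι z‖ ≤ 2 * ε * ‖z‖ := fun z => by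
    have h := hO z
    rw [norm_sub_rev] at h
    exact h
  have fin1 : Phi (margR g V) θ ι (p + k) ≠ ∞ := Phi_ne_top H hθ ho hq hq3
  have fin2 : Phi (margR g V) θ' ι' (p + k) ≠ ∞ := Phi_ne_top H hθ' ho' hq hq3
  have pos1 : Phi (margR g V) θ ι (p + k) ≠ 0 := Phi_ne_zero H hθ ho hq
  have pos2 : Phi (margR g V) θ' ι' (p + k) ≠ 0 := Phi_ne_zero H hθ' ho' hq
  have c1 := log_step pos1 fin1 fin2 (cone_comp H hθ ho hε0 hθd hιd hq hq3)
  have c2 := log_step pos2 fin2 fin1 (cone_comp H hθ' ho' hε0 (by rw [norm_sub_rev]; exact hθd)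
    (fun z => by rw [norm_sub_rev]; exact hιd z) hq hq3)
  have hs := sphereVol_pos hk2
  have e1 : hkp g E₀ θ₀ k p u = sphereVol k * (Phi (margR g V) θ ι (p + k)).toReal := by
    unfold hkp
    congr 1
    exact int_eq_Phi hg hi h1 hFV θ (p + k) fin1
  have e2 : hkp g E₀ θ₀ k p v = sphereVol k * (Phi (margR g V) θ' ι' (p + k)).toReal := by
    unfold hkp
    congr 1
    have hc : Phi (margR g V) θ' ι' (p + k) = Phi (margR g V) θ' (inclY F' V) (p + k) := Phi_comp _ _ _ _ _
    rw [hc] at fin2 ⊢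
    exact int_eq_Phi hg hi h1 hFV' θ' (p + k) fin2
  rw [e1, e2, Real.log_mul hs.ne' (ENNReal.toReal_pos pos1 fin1).ne',
    Real.log_mul hs.ne' (ENNReal.toReal_pos pos2 fin2).ne', add_sub_add_left_eq_sub, abs_le]
  constructor
  · linarith
  · linarith
end
end

section
/- There holds the following two-sided bound. Let K be a convex body in ℝ^m containing the origin in its interior, let θ be a unit vector, and let q ≥ 1. Denote by f_θ(s) the (m−1)-dimensional volume of the section {x ∈ K : ⟨x,θ⟩ = s}, by H_θ⁺ := {x ∈ ℝ^m : ⟨x,θ⟩ ≥ 0}, and by h_K(θ) := sup_{x∈K} ⟨x,θ⟩. Then (f_θ(0)/‖f_θ‖_∞)^{1/q}·(Γ(m)Γ(q+1)/Γ(m+q+1))^{1/q}·h_K(θ) ≤ h_{Z⁺_q(K)}(θ)/(2·vol(K ∩ H_θ⁺))^{1/q} ≤ h_K(θ), where ‖f_θ‖_∞ = sup_s f_θ(s). -/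
open MeasureTheory ProbabilityTheory Real
open scoped ENNReal RealInnerProductSpace Pointwise NNReal

noncomputable section

theorem aux_fub {m : ℕ} (θ : EuclideanSpace ℝ (Fin m)) (hθ : ‖θ‖ = 1) :
    ∃ c : ℝ, 0 < c ∧ ∀ g : EuclideanSpace ℝ (Fin m) → ℝ, Integrable g →
      (∫ x, g x = c * ∫ s : ℝ,
        ∫ y : ((Submodule.span ℝ ({θ} : Set (EuclideanSpace ℝ (Fin m))))ᗮ), g (s • θ + y)) ∧
      Integrable (fun s : ℝ =>
        ∫ y : ((Submodule.span ℝ ({θ} : Set (EuclideanSpace ℝ (Fin m))))ᗮ), g (s • θ + y)) := by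
  set P := (Submodule.span ℝ ({θ} : Set (EuclideanSpace ℝ (Fin m))))ᗮ with hP
  have hθθ : ⟪θ, θ⟫ = 1 := by rw [real_inner_self_eq_norm_sq, hθ]; norm_num
  have horth : ∀ y : P, ⟪θ, (y : EuclideanSpace ℝ (Fin m))⟫ = 0 := fun y =>
    Submodule.mem_orthogonal_singleton_iff_inner_right.1 y.2
  let T : (ℝ × P) →ₗ[ℝ] EuclideanSpace ℝ (Fin m) :=
    (LinearMap.toSpanSingleton ℝ _ θ).coprod P.subtype
  have hT : ∀ p, T p = p.1 • θ + (p.2 : EuclideanSpace ℝ (Fin m)) := fun p => by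
    simp [T]
  have hbij : Function.Bijective T := by
    constructor
    · rw [injective_iff_map_eq_zero]
      rintro ⟨s, y⟩ h
      rw [hT] at h
      have h1 : s = 0 := by
        have := congrArg (fun z => ⟪θ, z⟫) h
        simp only [inner_add_right, inner_smul_right, hθθ, horth, inner_zero_right] at this
        linarith
      subst h1
      simp at h
      simp [h]
    · intro x
      refine ⟨(⟪θ, x⟫, ⟨x - ⟪θ, x⟫ • θ, ?_⟩), ?_⟩
      · apply Submodule.mem_orthogonal_singleton_iff_inner_right.2
        simp [inner_sub_right, inner_smul_right, hθθ, hθ]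
      · rw [hT]; simp
  let L : (ℝ × P) ≃L[ℝ] EuclideanSpace ℝ (Fin m) :=
    (LinearEquiv.ofBijective T hbij).toContinuousLinearEquiv
  have hL : ∀ s y, L (s, y) = s • θ + (y : EuclideanSpace ℝ (Fin m)) := fun s y => hT (s, y)
  let μ : Measure (ℝ × P) := (volume : Measure ℝ).prod (volume : Measure P)
  have : (μ.map L).IsAddHaarMeasure := L.isAddHaarMeasure_map μ
  have heq := Measure.isAddLeftInvariant_eq_smul (volume : Measure (EuclideanSpace ℝ (Fin m))) (μ.map L)
  have hpos := Measure.addHaarScalarFactor_pos_of_isAddHaarMeasure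
    (volume : Measure (EuclideanSpace ℝ (Fin m))) (μ.map L)
  set c := Measure.addHaarScalarFactor (volume : Measure (EuclideanSpace ℝ (Fin m))) (μ.map L)
  have hemb : MeasurableEmbedding L := L.toHomeomorph.measurableEmbedding
  refine ⟨c, by exact_mod_cast hpos, fun g hg => ?_⟩
  rw [heq] at hg
  have hg1 : Integrable g (μ.map L) := by
    have := (integrable_smul_measure (c := (c : ℝ≥0∞)) (by exact_mod_cast hpos.ne') ENNReal.coe_ne_top).1 hg
    exact this
  have hg2 : Integrable (fun p => g (L p)) μ := (hemb.integrable_map_iff).1 hg1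
  constructor
  · rw [heq, integral_smul_nnreal_measure, hemb.integral_map, integral_prod _ hg2]
    simp only [hL]; rfl
  · have := hg2.integral_prod_left
    simpa only [hL] using this

theorem aux_beta (m : ℕ) (hm : 1 ≤ m) (q : ℝ) (hq : 1 ≤ q) (h : ℝ) (hh : 0 < h) :
    ∫ s in Set.Icc 0 h, s ^ q * (1 - s / h) ^ (m - 1) =
      h ^ (q + 1) * (Real.Gamma (m : ℝ) * Real.Gamma (q + 1) / Real.Gamma ((m : ℝ) + q + 1)) := by
  have h1 : ∫ t in (0:ℝ)..1, t ^ q * (1 - t) ^ (m - 1) =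
      Real.Gamma (m : ℝ) * Real.Gamma (q + 1) / Real.Gamma ((m : ℝ) + q + 1) := by
    have hb := beta_eq_betaIntegralReal (q + 1) m (by linarith) (by exact_mod_cast hm)
    have : Real.Gamma (m : ℝ) * Real.Gamma (q + 1) / Real.Gamma ((m : ℝ) + q + 1) =
      beta (q + 1) m := by
      rw [beta, mul_comm, add_assoc, add_comm (m : ℝ)]
    rw [this, hb, Complex.betaIntegral]
    rw [← Complex.ofReal_re (∫ t in (0:ℝ)..1, t ^ q * (1 - t) ^ (m - 1)),
      ← intervalIntegral.integral_ofReal]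
    congr 1
    apply intervalIntegral.integral_congr
    intro t ht
    simp only [Set.uIcc_of_le zero_le_one, Set.mem_Icc] at ht
    have e1 : ((m : ℝ) : ℂ) - 1 = ((m - 1 : ℕ) : ℂ) := by
      push_cast [Nat.cast_sub hm]; rfl
    simp only
    rw [e1, Complex.cpow_natCast]
    push_cast
    rw [Complex.ofReal_cpow ht.1]
    simp
  rw [integral_Icc_eq_integral_Ioc, ← intervalIntegral.integral_of_le hh.le, ← h1]
  have := intervalIntegral.integral_comp_div (a := 0) (b := h)
    (fun t => t ^ q * (1 - t) ^ (m - 1)) hh.ne'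
  rw [zero_div, div_self hh.ne', smul_eq_mul] at this
  rw [Real.rpow_add hh, Real.rpow_one, mul_assoc, ← this, ← intervalIntegral.integral_const_mul]
  apply intervalIntegral.integral_congr
  intro s hs
  simp only [Set.uIcc_of_le hh.le, Set.mem_Icc] at hs
  simp only
  rw [Real.div_rpow hs.1 hh.le]
  have := Real.rpow_pos_of_pos hh q
  field_simp

theorem aux_main (m : ℕ) (hm : 1 ≤ m) (K : Set (EuclideanSpace ℝ (Fin m)))
    (hKc : IsCompact K) (hKconv : Convex ℝ K) (h0 : (0 : EuclideanSpace ℝ (Fin m)) ∈ K)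
    (θ : EuclideanSpace ℝ (Fin m)) (hθ : ‖θ‖ = 1) (q : ℝ) (hq : 1 ≤ q)
    (f : ℝ → ℝ)
    (hf : f = fun s : ℝ =>
      ∫ y : ((Submodule.span ℝ ({θ} : Set (EuclideanSpace ℝ (Fin m))))ᗮ),
        K.indicator (fun _ => (1:ℝ)) (s • θ + y)) (h M I V : ℝ)
    (hh : h = ⨆ x : K, ⟪(x : EuclideanSpace ℝ (Fin m)), θ⟫)
    (hM : M = ⨆ s : ℝ, f s)
    (hI : I = ∫ x, (max ⟪x, θ⟫ 0) ^ q * K.indicator (fun _ => (1:ℝ)) x)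
    (hV : V = (volume (K ∩ {x | 0 ≤ ⟪x, θ⟫})).toReal) :
    0 ≤ h ∧ I ≤ h ^ q * V ∧ 0 ≤ f 0 ∧ f 0 ≤ M ∧ ∃ c : ℝ, 0 < c ∧ V ≤ c * (h * M) ∧
      (0 < h → c * (f 0 * (h ^ (q + 1) * (Real.Gamma (m : ℝ) * Real.Gamma (q + 1) /
        Real.Gamma ((m : ℝ) + q + 1)))) ≤ I) := by
  have hθθ : ⟪θ, θ⟫ = 1 := by rw [real_inner_self_eq_norm_sq, hθ]; norm_num
  obtain ⟨c, hc, hfub⟩ := aux_fub θ hθ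
  have horth : ∀ y : ((Submodule.span ℝ ({θ} : Set (EuclideanSpace ℝ (Fin m))))ᗮ),
      ⟪(y : EuclideanSpace ℝ (Fin m)), θ⟫ = 0 := fun y =>
    Submodule.mem_orthogonal_singleton_iff_inner_left.1 y.2
  have hfr : Module.finrank ℝ ((Submodule.span ℝ ({θ} : Set (EuclideanSpace ℝ (Fin m))))ᗮ)
      = m - 1 := by
    apply Submodule.finrank_add_finrank_orthogonal'
    rw [finrank_span_singleton (by rintro rfl; simp at hθ), finrank_euclideanSpace_fin]
    omega
  set P := (Submodule.span ℝ ({θ} : Set (EuclideanSpace ℝ (Fin m))))ᗮ with hP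
  have hin : ∀ (s : ℝ) (y : P), ⟪s • θ + (y : EuclideanSpace ℝ (Fin m)), θ⟫ = s := fun s y => by
    rw [inner_add_left, horth, real_inner_smul_left, hθθ]; ring
  have hcont : Continuous (fun x : EuclideanSpace ℝ (Fin m) => ⟪x, θ⟫) := by fun_prop
  have hbdd : BddAbove (Set.range fun x : K => ⟪(x : EuclideanSpace ℝ (Fin m)), θ⟫) := by
    have := (hKc.image hcont).bddAbove
    rwa [Set.image_eq_range] at this
  have hle : ∀ x ∈ K, ⟪x, θ⟫ ≤ h := fun x hx => hh ▸ le_ciSup hbdd ⟨x, hx⟩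
  obtain ⟨x0, hx0, hx0h⟩ : ∃ x ∈ K, ⟪x, θ⟫ = h := by
    obtain ⟨x, hx, hmax⟩ := hKc.exists_isMaxOn ⟨0, h0⟩ hcont.continuousOn
    refine ⟨x, hx, le_antisymm (hle x hx) ?_⟩
    have : Nonempty K := ⟨⟨0, h0⟩⟩
    rw [hh]
    exact ciSup_le fun y => hmax y.2
  have hhnn : 0 ≤ h := by simpa using hle 0 h0
  have hKm : MeasurableSet K := hKc.isClosed.measurableSet
  have hKfin : volume K ≠ ∞ := hKc.measure_lt_top.ne
  -- sections
  let S : ℝ → Set P := fun s => {y | s • θ + (y : EuclideanSpace ℝ (Fin m)) ∈ K}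
  have hSm : ∀ s, MeasurableSet (S s) := fun s => by
    have : Continuous (fun y : P => s • θ + (y : EuclideanSpace ℝ (Fin m))) := by fun_prop
    exact this.measurable hKm
  have hfS : ∀ s, f s = volume.real (S s) := fun s => by
    rw [hf, ← integral_indicator_one (hSm s)]
    rfl
  obtain ⟨R, hR⟩ := hKc.isBounded.subset_closedBall 0
  have hSb : ∀ s, S s ⊆ Metric.closedBall 0 R := fun s y hy => by
    have h1 := hR hy
    rw [mem_closedBall_zero_iff] at h1 ⊢
    refine le_trans ?_ h1
    have h2 : ⟪s • θ, (y : EuclideanSpace ℝ (Fin m))⟫ = 0 := by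
      rw [real_inner_smul_left, real_inner_comm, horth, mul_zero]
    have h3 := norm_add_sq_real (s • θ) (y : EuclideanSpace ℝ (Fin m))
    rw [h2] at h3
    have : ‖y‖ = ‖(y : EuclideanSpace ℝ (Fin m))‖ := rfl
    rw [this]
    apply le_of_sq_le_sq _ (norm_nonneg _)
    nlinarith [sq_nonneg ‖s • θ‖]
  have hballfin : volume (Metric.closedBall (0 : P) R) ≠ ∞ := measure_closedBall_lt_top.ne
  have hSfin : ∀ s, volume (S s) ≠ ∞ := fun s => measure_ne_top_of_subset (hSb s) hballfin
  have hfbdd : BddAbove (Set.range f) := by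
    refine ⟨volume.real (Metric.closedBall (0 : P) R), ?_⟩
    rintro _ ⟨s, rfl⟩
    rw [hfS]
    exact measureReal_mono (hSb s) hballfin
  have hfM : ∀ s, f s ≤ M := fun s => hM ▸ le_ciSup hfbdd s
  have hfnn : ∀ s, 0 ≤ f s := fun s => by rw [hfS]; exact measureReal_nonneg
  have hMnn : 0 ≤ M := (hfnn 0).trans (hfM 0)
  have hfzero : ∀ s, h < s → f s = 0 := fun s hs => by
    have : S s = ∅ := by
      ext y
      simp only [Set.mem_empty_iff_false, iff_false]
      intro hy
      have := hle _ hy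
      rw [hin] at this
      linarith
    rw [hfS, this]; simp
  -- integrability
  have hg1 : Integrable (fun x => (max ⟪x, θ⟫ 0) ^ q * K.indicator (fun _ => (1:ℝ)) x) := by
    have : (fun x => (max ⟪x, θ⟫ 0) ^ q * K.indicator (fun _ => (1:ℝ)) x) =
        K.indicator (fun x => (max ⟪x, θ⟫ 0) ^ q) := by
      ext x; by_cases hx : x ∈ K <;> simp [hx]
    rw [this, integrable_indicator_iff hKm]
    apply ContinuousOn.integrableOn_compact hKc
    apply Continuous.continuousOn
    exact (hcont.max continuous_const).rpow_const (fun x => Or.inr (by linarith))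
  have hHm : MeasurableSet {x : EuclideanSpace ℝ (Fin m) | 0 ≤ ⟪x, θ⟫} :=
    (isClosed_le continuous_const hcont).measurableSet
  have hA : MeasurableSet (K ∩ {x | 0 ≤ ⟪x, θ⟫}) := hKm.inter hHm
  have hAfin : volume (K ∩ {x | 0 ≤ ⟪x, θ⟫}) ≠ ∞ :=
    measure_ne_top_of_subset Set.inter_subset_left hKfin
  have hg2 : Integrable ((K ∩ {x | 0 ≤ ⟪x, θ⟫}).indicator (1 : EuclideanSpace ℝ (Fin m) → ℝ)) :=
    (integrable_indicator_iff hA).2 (integrableOn_const hAfin)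
  have hV2 : V = ∫ x, (K ∩ {x | 0 ≤ ⟪x, θ⟫}).indicator (1 : EuclideanSpace ℝ (Fin m) → ℝ) x := by
    rw [integral_indicator_one hA, hV]; rfl
  refine ⟨hhnn, ?_, hfnn 0, hfM 0, c, hc, ?_, ?_⟩
  · rw [hI, hV2, ← integral_const_mul]
    apply integral_mono hg1 (hg2.const_mul _)
    intro x
    by_cases hx : x ∈ K
    · by_cases hx2 : 0 ≤ ⟪x, θ⟫
      · simp only [Set.indicator, Set.mem_inter_iff, hx, hx2, Set.mem_ofPred_eq, and_self, if_true,
          max_eq_left, mul_one, Pi.one_apply]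
        exact Real.rpow_le_rpow hx2 (hle x hx) (by linarith)
      · simp only [Set.indicator, Set.mem_inter_iff, hx, hx2, Set.mem_ofPred_eq, and_false, if_true,
          if_false, max_eq_right (not_le.1 hx2).le, mul_one, mul_zero]
        rw [Real.zero_rpow (by linarith)]
    · simp [hx]
  · obtain ⟨e, hint⟩ := hfub _ hg2
    rw [hV2, e]
    have e2 : (fun s : ℝ => ∫ y : P, (K ∩ {x | 0 ≤ ⟪x, θ⟫}).indicator
        (1 : EuclideanSpace ℝ (Fin m) → ℝ) (s • θ + y)) = (Set.Ici (0:ℝ)).indicator f := by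
      ext s
      by_cases hs : 0 ≤ s
      · rw [Set.indicator_of_mem (by exact hs), hf]
        apply integral_congr_ae
        filter_upwards with y
        by_cases hy : s • θ + (y : EuclideanSpace ℝ (Fin m)) ∈ K <;>
          simp [Set.indicator, hy, hin, hs]
      · rw [Set.indicator_of_notMem (by simpa using hs)]
        rw [← integral_zero P ℝ]
        apply integral_congr_ae
        filter_upwards with y
        simp [Set.indicator, hin, hs]
    rw [e2] at hint ⊢
    apply mul_le_mul_of_nonneg_left _ hc.le
    have : h * M = ∫ s, (Set.Icc 0 h).indicator (fun _ => M) s := by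
      rw [integral_indicator measurableSet_Icc, setIntegral_const]
      simp [hhnn]
    rw [this]
    apply integral_mono hint
    · rw [integrable_indicator_iff measurableSet_Icc]
      exact integrableOn_const (by simp)
    · intro s
      by_cases hs : 0 ≤ s
      · by_cases hs2 : s ≤ h
        · simp [Set.indicator, hs, hs2, hfM]
        · simp [Set.indicator, hs, hs2, hfzero s (not_le.1 hs2)]
      · simp [Set.indicator, hs]
  · intro hpos
    obtain ⟨e, hint⟩ := hfub _ hg1
    rw [hI, e]
    have e2 : (fun s : ℝ => ∫ y : P, (max ⟪s • θ + (y : EuclideanSpace ℝ (Fin m)), θ⟫ 0) ^ q *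
        K.indicator (fun _ => (1:ℝ)) (s • θ + y)) = fun s => (max s 0) ^ q * f s := by
      ext s
      simp only [hin]
      rw [integral_const_mul, hf]
    rw [e2] at hint ⊢
    apply mul_le_mul_of_nonneg_left _ hc.le
    rw [← aux_beta m hm q hq h hpos, ← integral_const_mul, ← integral_indicator measurableSet_Icc]
    apply integral_mono _ hint
    · intro s
      by_cases hs : s ∈ Set.Icc 0 h
      · rw [Set.indicator_of_mem hs]
        simp only [max_eq_left hs.1]
        have key : f 0 * (1 - s / h) ^ (m - 1) ≤ f s := by
          have ht1 : 0 ≤ s / h := div_nonneg hs.1 hhnn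
          have ht2 : 0 ≤ 1 - s / h := by
            rw [sub_nonneg, div_le_one hpos]; exact hs.2
          have hy0 : x0 - h • θ ∈ P := by
            apply Submodule.mem_orthogonal_singleton_iff_inner_left.2
            rw [inner_sub_left, hx0h, real_inner_smul_left, hθθ]; ring
          have hsub : ((s / h) • (⟨x0 - h • θ, hy0⟩ : P)) +ᵥ ((1 - s / h) • S 0) ⊆ S s := by
            rintro _ ⟨_, ⟨y, hy, rfl⟩, rfl⟩
            have hy' : (y : EuclideanSpace ℝ (Fin m)) ∈ K := by simpa [S] using hy
            have := hKconv hx0 hy' ht1 ht2 (by ring)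
            change s • θ + (((s / h) • (x0 - h • θ)) + (1 - s / h) • (y : EuclideanSpace ℝ (Fin m))) ∈ K
            convert this using 1
            rw [smul_sub, smul_smul, div_mul_cancel₀ _ hpos.ne']
            abel
          have := measureReal_mono hsub (hSfin s)
          rw [hfS, hfS]
          refine le_trans (le_of_eq ?_) this
          rw [measureReal_def, measureReal_def, measure_vadd,
            Measure.addHaar_smul_of_nonneg _ ht2, hfr, ENNReal.toReal_mul,
            ENNReal.toReal_ofReal (by positivity), mul_comm]
        have := mul_le_mul_of_nonneg_left key (Real.rpow_nonneg hs.1 q)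
        linarith
      · rw [Set.indicator_of_notMem hs]
        exact mul_nonneg (Real.rpow_nonneg (le_max_right _ _) _) (hfnn s)
    · rw [integrable_indicator_iff measurableSet_Icc]
      apply ContinuousOn.integrableOn_compact isCompact_Icc
      apply Continuous.continuousOn
      have := Real.continuous_rpow_const (q := q) (by linarith)
      fun_prop

/-- two-sided bound relating `h_{Z⁺_q(K)}(θ)` to `h_K(θ)` and the section
function `f_θ`. -/
theorem statement17 (m : ℕ) (hm : 1 ≤ m) (K : Set (EuclideanSpace ℝ (Fin m)))
    (hKc : IsCompact K) (hKconv : Convex ℝ K) (h0 : (0 : EuclideanSpace ℝ (Fin m)) ∈ interior K)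
    (θ : EuclideanSpace ℝ (Fin m)) (hθ : ‖θ‖ = 1) (q : ℝ) (hq : 1 ≤ q)
    (fθ : ℝ → ℝ)
    (hfθ : fθ = fun s : ℝ =>
      ∫ y : ((Submodule.span ℝ ({θ} : Set (EuclideanSpace ℝ (Fin m))))ᗮ),
        K.indicator (fun _ => (1:ℝ)) (s • θ + y)) :
    (fθ 0 / ⨆ s : ℝ, fθ s) ^ (1/q) *
        (Real.Gamma (m : ℝ) * Real.Gamma (q + 1) / Real.Gamma ((m : ℝ) + q + 1)) ^ (1/q) *
        (⨆ x : K, ⟪(x : EuclideanSpace ℝ (Fin m)), θ⟫) ≤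
      suppZplus (K.indicator fun _ => (1:ℝ)) q θ /
        (2 * (volume (K ∩ {x | 0 ≤ ⟪x, θ⟫})).toReal) ^ (1/q) ∧
    suppZplus (K.indicator fun _ => (1:ℝ)) q θ /
        (2 * (volume (K ∩ {x | 0 ≤ ⟪x, θ⟫})).toReal) ^ (1/q) ≤
      ⨆ x : K, ⟪(x : EuclideanSpace ℝ (Fin m)), θ⟫ := by
  obtain ⟨hh, hup, hf0, hfM, c, hc, hVle, hlow⟩ := aux_main m hm K hKc hKconv (interior_subset h0)
    θ hθ q hq fθ hfθ _ _ _ _ rfl rfl rfl rfl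
  unfold suppZplus
  set h := ⨆ x : K, ⟪(x : EuclideanSpace ℝ (Fin m)), θ⟫
  set M := ⨆ s : ℝ, fθ s
  set I := ∫ x, (max ⟪x, θ⟫ 0) ^ q * K.indicator (fun _ => (1:ℝ)) x
  set V := (volume (K ∩ {x | 0 ≤ ⟪x, θ⟫})).toReal
  set B := Real.Gamma (m : ℝ) * Real.Gamma (q + 1) / Real.Gamma ((m : ℝ) + q + 1)
  have hI0 : 0 ≤ I := integral_nonneg fun x =>
    mul_nonneg (Real.rpow_nonneg (le_max_right _ _) _) (Set.indicator_nonneg (fun _ _ => zero_le_one) _)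
  have hV0 : 0 ≤ V := ENNReal.toReal_nonneg
  have hq0 : 0 < q := by linarith
  have hmpos : (0:ℝ) < m := by exact_mod_cast hm
  have hB : 0 < B := div_pos (mul_pos (Real.Gamma_pos_of_pos hmpos)
    (Real.Gamma_pos_of_pos (by linarith))) (Real.Gamma_pos_of_pos (by linarith))
  have hhq : (h ^ q) ^ (1/q) = h := by
    rw [← Real.rpow_mul hh, mul_one_div_cancel hq0.ne', Real.rpow_one]
  have hhq0 : 0 ≤ h ^ q := Real.rpow_nonneg hh q
  have hdiv : (2 * I) ^ (1/q) / (2 * V) ^ (1/q) = (I / V) ^ (1/q) := by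
    rw [← Real.div_rpow (by positivity) (by positivity), mul_div_mul_left _ _ two_ne_zero]
  rw [hdiv]
  constructor
  · have hM0 : 0 ≤ M := hf0.trans hfM
    have hr : 0 ≤ fθ 0 / M := div_nonneg hf0 hM0
    have hL : (fθ 0 / M) ^ (1/q) * B ^ (1/q) * h = (fθ 0 / M * B * h ^ q) ^ (1/q) := by
      rw [Real.mul_rpow (by positivity) hhq0, Real.mul_rpow hr hB.le, hhq]
    rw [hL]
    apply Real.rpow_le_rpow (by positivity) _ (by positivity)
    rcases hh.eq_or_lt with h1 | h1
    · rw [← h1, Real.zero_rpow hq0.ne', mul_zero]; positivity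
    rcases hf0.eq_or_lt with h2 | h2
    · rw [← h2]; simp; positivity
    have hMp : 0 < M := h2.trans_le hfM
    have hl := hlow h1
    have hIp : 0 < I := lt_of_lt_of_le (by positivity) hl
    have hVp : 0 < V := by
      by_contra hcon
      have : V = 0 := le_antisymm (not_lt.1 hcon) hV0
      rw [this, mul_zero] at hup
      linarith
    rw [le_div_iff₀ hVp]
    refine le_trans ?_ hl
    calc fθ 0 / M * B * h ^ q * V ≤ fθ 0 / M * B * h ^ q * (c * (h * M)) := by
          apply mul_le_mul_of_nonneg_left hVle (by positivity)
      _ = _ := by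
          rw [Real.rpow_add h1, Real.rpow_one]; field_simp
  · rw [← hhq]
    apply Real.rpow_le_rpow (by positivity) _ (by positivity)
    exact div_le_of_le_mul₀ hV0 hhq0 hup
end
end
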